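/- arXiv:math/0503259 — 3 statements merged into one kernel-verified Lean document; each statement's English description precedes it below -/
import Mathlib

section
/- If F_1,…,F_m form a regular sequence in the local ring O_x of germs of holomorphic functions at a point x ∈ ℂ^n, and N is the product of positive integers bounding the orders appropriately (specifically N as in Shiffman's lemma), then the N-th power of the radical of the ideal (F_1,…,F_m)_x is contained in (F_1,…,F_m)_x: (√((F)_x))^N ⊆ (F)_x. -/
open MvPolynomial Filter

/-- The local ring `O_x` of germs of holomorphic functions at `x ∈ ℂ^n`, realized as the
subring of germs at `x` of `ℂ`-valued functions admitting a representative that is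
analytic at `x`. -/
def HoloGermAt (n : ℕ) (x : Fin n → ℂ) : Subring (Filter.Germ (nhds x) ℂ) where
  carrier := {g | ∃ f : (Fin n → ℂ) → ℂ, AnalyticAt ℂ f x ∧ g = (f : Filter.Germ (nhds x) ℂ)}
  mul_mem' := by
    rintro a b ⟨f, hf, rfl⟩ ⟨g, hg, rfl⟩
    exact ⟨f * g, hf.mul hg, rfl⟩
  one_mem' := ⟨1, analyticAt_const, rfl⟩
  add_mem' := by
    rintro a b ⟨f, hf, rfl⟩ ⟨g, hg, rfl⟩
    exact ⟨f + g, hf.add hg, rfl⟩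
  zero_mem' := ⟨0, analyticAt_const, rfl⟩
  neg_mem' := by
    rintro a ⟨f, hf, rfl⟩
    exact ⟨-f, hf.neg, rfl⟩

open RingTheory.Sequence IsLocalRing CategoryTheory Abelian Limits in
lemma shf_exists_reg_aux {A : Type} [CommRing A] [IsNoetherianRing A] (K : ModuleCat.{0} A)
    [Module.Finite A K] (as : List A) : ∀ (M : ModuleCat.{0} A) [Module.Finite A M],
    IsWeaklyRegular M as → (∀ i < as.length + 1, Subsingleton (Ext K M i)) →
    ∃ c ∈ Module.annihilator A K, IsSMulRegular (M ⧸ (Ideal.ofList as • ⊤ : Submodule A M)) c := by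
  induction as with
  | nil =>
    intro M _ _ h
    have h0 := h 0 (by simp)
    have : Subsingleton (K ⟶ M) := Ext.addEquiv₀.subsingleton_congr.mp h0
    have : Subsingleton (K →ₗ[A] M) := ModuleCat.homAddEquiv.symm.subsingleton
    obtain ⟨x, mem_ann, hx⟩ := IsSMulRegular.subsingleton_linearMap_iff.mp this
    refine ⟨x, mem_ann, ?_⟩
    exact ((Submodule.quotEquivOfEqBot (Ideal.ofList ([] : List A) • ⊤ : Submodule A M)
      (by simp)).isSMulRegular_congr x).mpr hx
  | cons a as ih =>
    intro M _ hreg h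
    rw [isWeaklyRegular_cons_iff] at hreg
    obtain ⟨c, hc, hc'⟩ := ih (ModuleCat.of A (QuotSMulTop a M)) hreg.2 (by
      intro i hi
      have zero1 := AddCommGrpCat.isZero_of_iff_subsingleton.mpr (h i (by simp; omega))
      have zero2 := AddCommGrpCat.isZero_of_iff_subsingleton.mpr (h (i + 1) (by simp; omega))
      exact AddCommGrpCat.subsingleton_of_isZero <| ShortComplex.Exact.isZero_of_both_zeros
        ((Ext.covariant_sequence_exact₃' K hreg.1.smulShortComplex_shortExact) i (i + 1) rfl)
        (zero1.eq_zero_of_src _) (zero2.eq_zero_of_tgt _))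
    exact ⟨c, hc, ((Submodule.quotOfListConsSMulTopEquivQuotSMulTopInner M a as).isSMulRegular_congr
      c).mpr hc'⟩

lemma shf_smul_top {A : Type} [CommRing A] (I : Ideal A) : (I • ⊤ : Submodule A A) = I := by
  simp

/-- regularity of an element modulo an ideal -/
lemma shf_reg_iff {A : Type} [CommRing A] (I : Ideal A) (a : A) :
    IsSMulRegular (A ⧸ (I • ⊤ : Submodule A A)) a ↔ ∀ b, a * b ∈ I → b ∈ I := by
  rw [isSMulRegular_iff_right_eq_zero_of_smul]
  constructor
  · intro h b hb
    have := h (Submodule.Quotient.mk b) (by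
      rw [← Submodule.Quotient.mk_smul, Submodule.Quotient.mk_eq_zero]; simpa using hb)
    rw [Submodule.Quotient.mk_eq_zero] at this
    simpa using this
  · intro h b
    obtain ⟨b, rfl⟩ := Submodule.Quotient.mk_surjective _ b
    rw [← Submodule.Quotient.mk_smul, Submodule.Quotient.mk_eq_zero, Submodule.Quotient.mk_eq_zero]
    intro hb
    simpa using h b (by simpa using hb)

open RingTheory.Sequence in
lemma shf_append {A : Type} [CommRing A] (as : List A) (a : A) :
    IsWeaklyRegular A (as ++ [a]) ↔ IsWeaklyRegular A as ∧
      ∀ b, a * b ∈ Ideal.ofList as → b ∈ Ideal.ofList as := by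
  rw [isWeaklyRegular_append_iff, isWeaklyRegular_singleton_iff, shf_reg_iff]

open RingTheory.Sequence IsLocalRing in
lemma shf_exists_reg {A : Type} [CommRing A] [IsLocalRing A] [IsNoetherianRing A]
    (zs : List A) (hz : IsWeaklyRegular A zs) (hzm : ∀ z ∈ zs, z ∈ maximalIdeal A)
    (as : List A) (ha : IsWeaklyRegular A as) (hlen : as.length < zs.length) :
    ∃ c ∈ maximalIdeal A, ∀ b, c * b ∈ Ideal.ofList as → b ∈ Ideal.ofList as := by
  have hne : (maximalIdeal A • ⊤ : Submodule A A) < ⊤ := by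
    rw [shf_smul_top]; exact (maximalIdeal.isMaximal A).ne_top.lt_top
  have hr : IsRegular A zs := IsRegular.of_isWeaklyRegular_of_mem_maximalIdeal A hzm hz
  have := ModuleCat.subsingleton_ext_of_exists_isRegular (maximalIdeal A)
    (ModuleCat.of A (A ⧸ maximalIdeal A)) (by
      rw [Module.support_eq_zeroLocus]
      simp [Ideal.annihilator_quotient]) (ModuleCat.of A A) hne zs hzm hr
  obtain ⟨c, hc, h⟩ := shf_exists_reg_aux (ModuleCat.of A (A ⧸ maximalIdeal A)) as
    (ModuleCat.of A A) ha (fun i hi => this i (by omega))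
  refine ⟨c, by simpa [Ideal.annihilator_quotient] using hc, ?_⟩
  exact (shf_reg_iff _ _).mp h

open RingTheory.Sequence IsLocalRing in
/-- A generic linear form is regular modulo two given regular sequences. -/
lemma shf_exists_linear {A : Type} [CommRing A] [IsLocalRing A] [IsNoetherianRing A] [Algebra ℂ A]
    {n : ℕ} (t : Fin n → A) (ht : maximalIdeal A = Ideal.span (Set.range t))
    (hz : IsWeaklyRegular A (List.ofFn t))
    (as : List A) (ha : IsWeaklyRegular A as) (halen : as.length < n)
    (bs : List A) (hb : IsWeaklyRegular A bs) (hblen : bs.length < n) :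
    ∃ c : Fin n → ℂ, (∀ b, (∑ i, c i • t i) * b ∈ Ideal.ofList as → b ∈ Ideal.ofList as) ∧
      (∀ b, (∑ i, c i • t i) * b ∈ Ideal.ofList bs → b ∈ Ideal.ofList bs) := by
  have hzm : ∀ z ∈ List.ofFn t, z ∈ maximalIdeal A := by
    intro z hz
    rw [List.mem_ofFn] at hz
    obtain ⟨i, rfl⟩ := hz
    rw [ht]; exact Ideal.subset_span ⟨i, rfl⟩
  set MA := A ⧸ (Ideal.ofList as • ⊤ : Submodule A A)
  set MB := A ⧸ (Ideal.ofList bs • ⊤ : Submodule A A)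
  have key : ∀ (cs : List A), IsWeaklyRegular A cs → cs.length < n →
      ∀ P ∈ associatedPrimes A (A ⧸ (Ideal.ofList cs • ⊤ : Submodule A A)),
      ¬ (∀ i, t i ∈ P) := by
    intro cs hcs hl P hP hall
    obtain ⟨c, hc, h⟩ := shf_exists_reg (List.ofFn t) hz hzm cs hcs (by simpa using hl)
    have hcP : c ∈ P := by
      rw [ht] at hc
      exact (Ideal.span_le.mpr (by rintro _ ⟨i, rfl⟩; exact hall i)) hc
    have hU : c ∈ ⋃ p ∈ associatedPrimes A (A ⧸ (Ideal.ofList cs • ⊤ : Submodule A A)),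
      (p : Set A) := by
      simp only [Set.mem_iUnion]
      exact ⟨P, hP, hcP⟩
    rw [biUnion_associatedPrimes_eq_compl_regular] at hU
    exact hU ((shf_reg_iff _ _).mpr h)
  let L : (Fin n → ℂ) →ₗ[ℂ] A := Fintype.linearCombination ℂ t
  have hL : ∀ c, L c = ∑ i, c i • t i := fun c => by simp [L, Fintype.linearCombination_apply]
  let S : Set (Ideal A) := associatedPrimes A MA ∪ associatedPrimes A MB
  have hS : S.Finite := (associatedPrimes.finite A MA).union (associatedPrimes.finite A MB)
  let W : Ideal A → Subspace ℂ (Fin n → ℂ) := fun P => (P.restrictScalars ℂ).comap L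
  have hT : (W '' S).Finite := hS.image _
  have hne : ⋃ p ∈ hT.toFinset, (p : Set (Fin n → ℂ)) ≠ Set.univ := by
    apply Subspace.biUnion_ne_univ_of_top_notMem
    intro htop
    rw [Set.Finite.mem_toFinset] at htop
    obtain ⟨P, hP, hPt⟩ := htop
    have hall : ∀ i, t i ∈ P := by
      intro i
      have : Pi.single i (1 : ℂ) ∈ W P := by rw [hPt]; trivial
      simpa [W, L] using this
    rcases hP with hP | hP
    · exact key as ha halen P hP hall
    · exact key bs hb hblen P hP hall
  obtain ⟨c, hc⟩ := (Set.ne_univ_iff_exists_notMem _).mp hne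
  have hc' : ∀ P ∈ S, L c ∉ P := by
    intro P hP hcP
    apply hc
    simp only [Set.mem_iUnion]
    exact ⟨W P, by simpa using ⟨P, hP, rfl⟩, hcP⟩
  have fin : ∀ (cs : List A), associatedPrimes A (A ⧸ (Ideal.ofList cs • ⊤ : Submodule A A)) ⊆ S →
      ∀ b, (∑ i, c i • t i) * b ∈ Ideal.ofList cs → b ∈ Ideal.ofList cs := by
    intro cs hcs
    rw [← shf_reg_iff, ← hL]
    by_contra hcon
    have : L c ∈ ⋃ p ∈ associatedPrimes A (A ⧸ (Ideal.ofList cs • ⊤ : Submodule A A)),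
      (p : Set A) := by
      rw [biUnion_associatedPrimes_eq_compl_regular]; exact hcon
    simp only [Set.mem_iUnion] at this
    obtain ⟨P, hP, h⟩ := this
    exact hc' P (hcs hP) h
  exact ⟨c, fin as Set.subset_union_left, fin bs Set.subset_union_right⟩

lemma shf_indep_step {A M : Type} [CommRing A] [Algebra ℂ A] [AddCommGroup M] [Module A M]
    [Module ℂ M] [IsScalarTower ℂ A M] (a : A) (ha : IsSMulRegular M a) {κ : Type} (v : κ → M)
    (hv : ∀ (s : Finset κ) (c : κ → ℂ), (∃ m : M, ∑ k ∈ s, c k • v k = a • m) → ∀ k ∈ s, c k = 0) :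
    LinearIndependent ℂ (fun p : ℕ × κ => a ^ p.1 • v p.2) := by
  classical
  have main : ∀ (J : ℕ) (s : Finset κ) (c : ℕ → κ → ℂ),
      ∑ j ∈ Finset.range J, a ^ j • ∑ k ∈ s, c j k • v k = 0 → ∀ j < J, ∀ k ∈ s, c j k = 0 := by
    intro J
    induction J with
    | zero => intro s c _ j hj; omega
    | succ J ih =>
      intro s c h
      rw [Finset.sum_range_succ'] at h
      have h1 : ∀ k ∈ s, c 0 k = 0 := by
        apply hv
        refine ⟨-∑ j ∈ Finset.range J, a ^ j • ∑ k ∈ s, c (j + 1) k • v k, ?_⟩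
        rw [smul_neg, Finset.smul_sum, eq_neg_iff_add_eq_zero, add_comm, ← h]
        simp [pow_succ', mul_smul]
      have h2 : ∑ k ∈ s, c 0 k • v k = 0 :=
        Finset.sum_eq_zero fun k hk => by rw [h1 k hk, zero_smul]
      rw [h2, smul_zero, add_zero] at h
      have h3 : a • ∑ j ∈ Finset.range J, a ^ j • ∑ k ∈ s, c (j + 1) k • v k = 0 := by
        rw [Finset.smul_sum, ← h]
        simp [pow_succ', mul_smul]
      have h4 := ha.right_eq_zero_of_smul h3
      have h5 := ih s (fun j => c (j + 1)) h4
      intro j hj k hk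
      cases j with
      | zero => exact h1 k hk
      | succ j => exact h5 j (by omega) k hk
  rw [linearIndependent_iff']
  intro S g hS ⟨j, k⟩ hjk
  let J := (S.image Prod.fst).sup id + 1
  let s := S.image Prod.snd
  have hsub : S ⊆ Finset.range J ×ˢ s := by
    intro p hp
    rw [Finset.mem_product]
    refine ⟨?_, Finset.mem_image_of_mem _ hp⟩
    rw [Finset.mem_range]
    exact Nat.lt_succ_of_le (Finset.le_sup (f := id) (Finset.mem_image_of_mem Prod.fst hp))
  have := main J s (fun j k => if (j, k) ∈ S then g (j, k) else 0) (by
    have h1 : ∑ p ∈ Finset.range J ×ˢ s, (if p ∈ S then g p else 0) • a ^ p.1 • v p.2 = 0 := by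
      rw [← Finset.sum_subset hsub (by intro x _ hx; simp [hx]), ← hS]
      exact Finset.sum_congr rfl fun p hp => by simp [hp]
    rw [Finset.sum_product] at h1
    rw [← h1]
    refine Finset.sum_congr rfl fun j _ => ?_
    rw [Finset.smul_sum]
    exact Finset.sum_congr rfl fun k _ => smul_comm _ _ _)
  have hm := Finset.mem_product.mp (hsub hjk)
  simpa [hjk] using this j (Finset.mem_range.mp hm.1) k hm.2

open RingTheory.Sequence in
lemma shf_indep {A : Type} [CommRing A] [Algebra ℂ A] (k : ℕ) :
    ∀ (M : Type) [AddCommGroup M] [Module A M] [Module ℂ M] [IsScalarTower ℂ A M]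
    (f : Fin k → A) (_ : IsWeaklyRegular M (List.ofFn f)) {ι : Type} (u : ι → M)
    (_ : ∀ (s : Finset ι) (c : ι → ℂ), ∑ i ∈ s, c i • u i ∈
      (Ideal.ofList (List.ofFn f) • ⊤ : Submodule A M) → ∀ i ∈ s, c i = 0),
    LinearIndependent ℂ (fun p : (Fin k → ℕ) × ι => (∏ j, f j ^ p.1 j) • u p.2) := by
  induction k with
  | zero =>
    intro M _ _ _ _ f _ ι u hu
    have h1 : LinearIndependent ℂ u := by
      rw [linearIndependent_iff']
      intro s c h
      exact hu s c (by rw [h]; exact zero_mem _)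
    refine (linearIndependent_equiv' (Equiv.uniqueProd ι (Fin 0 → ℕ)) ?_).mpr h1
    funext p
    simp [Equiv.uniqueProd]
  | succ k ih =>
    intro M _ _ _ _ f hf ι u hu
    rw [List.ofFn_succ, isWeaklyRegular_cons_iff] at hf
    have h1 := ih (QuotSMulTop (f 0) M) (fun i => f i.succ) hf.2
      (fun i => Submodule.Quotient.mk (u i)) (by
        intro s c h
        apply hu s c
        rw [List.ofFn_succ]
        rw [← Submodule.Quotient.mk_eq_zero]
        apply (Submodule.quotOfListConsSMulTopEquivQuotSMulTopInner M (f 0)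
          (List.ofFn fun i => f i.succ)).injective
        rw [map_zero]
        rw [← Submodule.Quotient.mk_eq_zero] at h
        rw [← h]
        change (Submodule.Quotient.mk (Submodule.Quotient.mk (∑ i ∈ s, c i • u i)) : _ ⧸ _) = _
        congr 1
        change Submodule.mkQ _ _ = _
        rw [map_sum]
        rfl)
    have h2 := shf_indep_step (f 0) hf.1
      (fun p : (Fin k → ℕ) × ι => (∏ j, f (Fin.succ j) ^ p.1 j) • u p.2) (by
        rintro s c ⟨m, hm⟩
        rw [linearIndependent_iff'] at h1
        apply h1 s c
        have : (Submodule.Quotient.mk (∑ q ∈ s, c q •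
          (fun p : (Fin k → ℕ) × ι => (∏ j, f (Fin.succ j) ^ p.1 j) • u p.2) q) :
            QuotSMulTop (f 0) M) = 0 := by
          rw [hm, Submodule.Quotient.mk_eq_zero]
          exact Submodule.smul_mem_pointwise_smul _ _ _ trivial
        rw [← this]
        change _ = Submodule.mkQ _ _
        rw [map_sum]
        rfl)
    let e : (Fin (k + 1) → ℕ) × ι ≃ ℕ × ((Fin k → ℕ) × ι) :=
      ((Fin.consEquiv (fun _ => ℕ)).symm.prodCongr (Equiv.refl ι)).trans (Equiv.prodAssoc _ _ _)
    refine (linearIndependent_equiv' e ?_).mpr h2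
    funext p
    simp [e, Fin.consEquiv, Fin.prod_univ_succ, mul_smul, Fin.tail]

/-- The simplex of exponents of total degree at most `E`. -/
noncomputable def shfSimplex (n E : ℕ) : Finset (Fin n → ℕ) :=
  (Fintype.piFinset fun _ => Finset.range (E + 1)).filter fun β => ∑ i, β i ≤ E

lemma mem_shfSimplex {n E : ℕ} {β : Fin n → ℕ} : β ∈ shfSimplex n E ↔ ∑ i, β i ≤ E := by
  simp only [shfSimplex, Finset.mem_filter, Fintype.mem_piFinset, Finset.mem_range,
    and_iff_right_iff_imp]
  intro h i
  have := Finset.single_le_sum (f := β) (fun _ _ => Nat.zero_le _) (Finset.mem_univ i)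
  omega

lemma shfSimplex_card_le (n E : ℕ) : (shfSimplex n E).card ≤ (E + 1) ^ n := by
  refine (Finset.card_filter_le _ _).trans ?_
  simp

/-- polynomials of bounded degree: dimension -/
lemma shf_finrank (n E : ℕ) : Module.finrank ℂ (MvPolynomial.restrictTotalDegree (Fin n) ℂ E) =
    (shfSimplex n E).card := by
  rw [MvPolynomial.restrictTotalDegree, Module.finrank_eq_nat_card_basis
    (MvPolynomial.basisRestrictSupport ℂ _), ← Nat.card_eq_finsetCard]
  refine Nat.card_congr (Equiv.subtypeEquiv Finsupp.equivFunOnFinite ?_)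
  intro a
  simp [mem_shfSimplex, Finsupp.sum_fintype]

/-- scaled simplex -/
noncomputable def shfSimplexW (n E : ℕ) (d : Fin n → ℕ) : Finset (Fin n → ℕ) :=
  (Fintype.piFinset fun _ => Finset.range (E + 1)).filter fun β => ∑ i, d i * β i ≤ E

lemma shfSimplex_card_le_W (n E : ℕ) (d : Fin n → ℕ) (hd : ∀ i, 0 < d i) :
    (shfSimplex n E).card ≤ (∏ i, d i) * (shfSimplexW n E d).card := by
  classical
  apply Finset.card_le_mul_card_image_of_maps_to (f := fun β i => β i / d i)
  · intro β hβ
    rw [mem_shfSimplex] at hβ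
    simp only [shfSimplexW, Finset.mem_filter, Fintype.mem_piFinset, Finset.mem_range]
    constructor
    · intro i
      have := Finset.single_le_sum (f := β) (fun _ _ => Nat.zero_le _) (Finset.mem_univ i)
      have h2 := Nat.div_le_self (β i) (d i)
      omega
    · exact (Finset.sum_le_sum fun i _ => Nat.mul_div_le (β i) (d i)).trans hβ
  · intro α _
    have : (Fintype.piFinset fun i => Finset.range (d i)).card = ∏ i, d i := by simp
    rw [← this]
    apply Finset.card_le_card_of_injOn (fun β i => β i % d i)
    · intro β _
      simp only [Fintype.coe_piFinset, Set.mem_pi, Finset.coe_range]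
      exact fun i _ => Nat.mod_lt _ (hd i)
    · intro β hβ γ hγ h
      simp only [Finset.coe_filter] at hβ hγ
      funext i
      have h1 := congrFun (hβ.2.trans hγ.2.symm) i
      have h2 := congrFun h i
      simp only at h1 h2
      rw [← Nat.div_add_mod (β i) (d i), ← Nat.div_add_mod (γ i) (d i), h1, h2]

lemma shf_growth (n M N D : ℕ) (hN : 0 < N)
    (h : ∀ E, M * (shfSimplex n E).card ≤ N * (shfSimplex n (D + E)).card) : M ≤ N := by
  by_contra hMN
  push Not at hMN
  set H : ℕ → ℕ := fun E => (shfSimplex n E).card with hH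
  have h0 : 1 ≤ H 0 := Finset.card_pos.mpr ⟨0, by simp [mem_shfSimplex]⟩
  have hN' : (0 : ℝ) < N := by exact_mod_cast hN
  set q : ℝ := (M : ℝ) / N with hq
  have hq1 : 1 < q := by rw [hq, one_lt_div hN']; exact_mod_cast hMN
  have hpow : ∀ k : ℕ, q ^ k ≤ (H (D * k) : ℝ) := by
    intro k
    induction k with
    | zero => simpa using h0
    | succ k ih =>
      have h1 := h (D * k)
      have h2 : (M : ℝ) * H (D * k) ≤ N * H (D + D * k) := by exact_mod_cast h1
      have h3 : q * H (D * k) ≤ H (D + D * k) := by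
        rw [hq, div_mul_eq_mul_div, div_le_iff₀ hN']; linarith
      calc q ^ (k + 1) = q * q ^ k := pow_succ' _ _
        _ ≤ q * H (D * k) := by gcongr
        _ ≤ H (D * (k + 1)) := by rw [mul_add, mul_one, add_comm]; exact h3
  have hup : ∀ k : ℕ, 1 ≤ k → q ^ k ≤ ((D + 1 : ℕ) : ℝ) ^ n * (k : ℝ) ^ n := by
    intro k hk
    refine (hpow k).trans ?_
    have := shfSimplex_card_le n (D * k)
    have h2 : (D * k + 1) ^ n ≤ ((D + 1) * k) ^ n := by
      gcongr; nlinarith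
    calc (H (D * k) : ℝ) ≤ (((D + 1) * k) ^ n : ℕ) := by exact_mod_cast this.trans h2
      _ = _ := by push_cast; rw [mul_pow]
  have hlim := tendsto_pow_const_div_const_pow_of_one_lt n hq1
  have hpos : (0 : ℝ) < 1 / (((D + 1 : ℕ) : ℝ) ^ n) := by positivity
  obtain ⟨k, hk, hk1⟩ := ((hlim.eventually_lt_const hpos).and
    (Filter.eventually_ge_atTop 1)).exists
  have := hup k hk1
  rw [div_lt_div_iff₀ (by positivity) (by positivity)] at hk
  nlinarith

open RingTheory.Sequence in
lemma shf_count {A : Type} [CommRing A] [Algebra ℂ A] {n : ℕ} (w : Fin n → A)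
    (f : Fin n → MvPolynomial (Fin n) ℂ) (hd : ∀ i, 0 < (f i).totalDegree)
    (hf : IsWeaklyRegular A (List.ofFn fun i => MvPolynomial.aeval w (f i)))
    (M : ℕ) (e : Fin M → MvPolynomial (Fin n) ℂ)
    (he : ∀ c : Fin M → ℂ, ∑ i, c i • MvPolynomial.aeval w (e i) ∈
      Ideal.ofList (List.ofFn fun i => MvPolynomial.aeval w (f i)) → ∀ i, c i = 0) :
    M ≤ ∏ i, (f i).totalDegree := by
  classical
  let φ := MvPolynomial.aeval (R := ℂ) w
  have hind := shf_indep n A (fun i => φ (f i)) hf (fun i => φ (e i)) (by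
    intro s c h i hi
    have := he (fun i => if i ∈ s then c i else 0) (by
      rw [shf_smul_top] at h
      simpa [ite_smul, Finset.sum_ite_mem] using h) i
    simpa [hi] using this)
  have hind2 : LinearIndependent ℂ (fun p : (Fin n → ℕ) × Fin M => (∏ j, f j ^ p.1 j) * e p.2) := by
    apply LinearIndependent.of_comp φ.toLinearMap
    have : (φ.toLinearMap ∘ fun p : (Fin n → ℕ) × Fin M => (∏ j, f j ^ p.1 j) * e p.2) =
        fun p => (∏ j, φ (f j) ^ p.1 j) • φ (e p.2) := by
      funext p
      simp [φ, map_prod]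
    rw [this]
    exact hind
  let D := Finset.univ.sup fun i => (e i).totalDegree
  apply shf_growth n M _ D (Finset.prod_pos fun i _ => hd i)
  intro E
  let d := fun i => (f i).totalDegree
  have hmem : ∀ p : (shfSimplexW n E d) × Fin M, (∏ j, f j ^ (p.1 : Fin n → ℕ) j) * e p.2 ∈
      MvPolynomial.restrictTotalDegree (Fin n) ℂ (D + E) := by
    rintro ⟨⟨α, hα⟩, i⟩
    rw [MvPolynomial.mem_restrictTotalDegree]
    simp only [shfSimplexW, Finset.mem_filter] at hα
    refine (MvPolynomial.totalDegree_mul _ _).trans ?_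
    rw [add_comm D E]
    gcongr
    · refine (MvPolynomial.totalDegree_finsetProd _ _).trans ?_
      refine le_trans (Finset.sum_le_sum fun j _ => ?_) hα.2
      rw [mul_comm]
      exact MvPolynomial.totalDegree_pow _ _
    · exact Finset.le_sup (f := fun i => (e i).totalDegree) (Finset.mem_univ i)
  have hind3 : LinearIndependent ℂ (fun p : (shfSimplexW n E d) × Fin M =>
      (⟨_, hmem p⟩ : MvPolynomial.restrictTotalDegree (Fin n) ℂ (D + E))) := by
    apply LinearIndependent.of_comp (Submodule.subtype _)
    exact hind2.comp (fun p : (shfSimplexW n E d) × Fin M => ((p.1 : Fin n → ℕ), p.2))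
      (by rintro ⟨a, b⟩ ⟨a', b'⟩ h; simp at h; rw [h.1, h.2])
  have hcard := hind3.fintype_card_le_finrank
  rw [shf_finrank] at hcard
  simp only [Fintype.card_prod, Fintype.card_coe, Fintype.card_fin] at hcard
  have h1 := shfSimplex_card_le_W n E d hd
  calc M * (shfSimplex n E).card ≤ M * ((∏ i, d i) * (shfSimplexW n E d).card) := by gcongr
    _ = (∏ i, d i) * ((shfSimplexW n E d).card * M) := by ring
    _ ≤ _ := by gcongr

section
open RingTheory.Sequence IsLocalRing MvPolynomial

lemma shf_list_count {A : Type} [CommRing A] [Algebra ℂ A] {n : ℕ} (w : Fin n → A)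
    (fs : List (MvPolynomial (Fin n) ℂ)) (hlen : fs.length = n)
    (hd : ∀ f ∈ fs, 0 < f.totalDegree)
    (hf : IsWeaklyRegular A (fs.map (aeval w)))
    (M : ℕ) (e : Fin M → MvPolynomial (Fin n) ℂ)
    (he : ∀ c : Fin M → ℂ, ∑ i, c i • aeval w (e i) ∈
      Ideal.ofList (fs.map (aeval w)) → ∀ i, c i = 0) :
    M ≤ (fs.map totalDegree).prod := by
  obtain ⟨f, rfl⟩ : ∃ f : Fin n → MvPolynomial (Fin n) ℂ, fs = List.ofFn f := by
    refine ⟨fun i => fs.get (i.cast hlen.symm), ?_⟩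
    apply List.ext_getElem
    · simp [hlen]
    · intro i h1 h2
      simp
  rw [List.map_ofFn] at *
  rw [List.prod_ofFn]
  exact shf_count w f (fun i => hd _ (by simp)) hf M e he

lemma shf_approx {A : Type} [CommRing A] [IsLocalRing A] [Algebra ℂ A]
    {n : ℕ} (t : Fin n → A) (ht : maximalIdeal A = Ideal.span (Set.range t))
    (hres : ∀ a : A, ∃ c : ℂ, a - algebraMap ℂ A c ∈ maximalIdeal A)
    (x : Fin n → ℂ) (k : ℕ) : ∀ a : A, ∃ q : MvPolynomial (Fin n) ℂ,
      a - aeval (fun i => algebraMap ℂ A (x i) + t i) q ∈ maximalIdeal A ^ k := by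
  induction k with
  | zero => intro a; exact ⟨0, by simp⟩
  | succ k ih =>
    intro a
    obtain ⟨c, hc⟩ := hres a
    have hc' := hc
    rw [ht, Ideal.mem_span_range_iff_exists_fun] at hc'
    obtain ⟨g, hg⟩ := hc'
    choose q hq using fun i => ih (g i)
    refine ⟨C c + ∑ i, q i * (X i - C (x i)), ?_⟩
    have : a - aeval (fun i => algebraMap ℂ A (x i) + t i) (C c + ∑ i, q i * (X i - C (x i))) =
        ∑ i, (g i - aeval (fun i => algebraMap ℂ A (x i) + t i) (q i)) * t i := by
      simp only [map_add, map_sum, map_mul, map_sub, aeval_X, MvPolynomial.algHom_C, sub_mul,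
        Finset.sum_sub_distrib, hg]
      simp
      ring
    rw [this]
    refine Ideal.sum_mem _ fun i _ => ?_
    rw [pow_succ]
    exact Ideal.mul_mem_mul (hq i) (by rw [ht]; exact Ideal.subset_span ⟨i, rfl⟩)

lemma shf_dim {A : Type} [CommRing A] [IsLocalRing A] [IsNoetherianRing A] [Algebra ℂ A]
    {n : ℕ} (t : Fin n → A) (ht : maximalIdeal A = Ideal.span (Set.range t))
    (hres : ∀ a : A, ∃ c : ℂ, a - algebraMap ℂ A c ∈ maximalIdeal A)
    (x : Fin n → ℂ) (w : Fin n → A) (hw : w = fun i => algebraMap ℂ A (x i) + t i)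
    (fs : List (MvPolynomial (Fin n) ℂ)) (hlen : fs.length = n)
    (hd : ∀ f ∈ fs, 0 < f.totalDegree)
    (hf : IsWeaklyRegular A (fs.map (aeval w))) :
    Module.Finite ℂ (A ⧸ Ideal.ofList (fs.map (aeval w))) ∧
    Module.finrank ℂ (A ⧸ Ideal.ofList (fs.map (aeval w))) ≤ (fs.map totalDegree).prod := by
  set I := Ideal.ofList (fs.map (aeval w)) with hI
  set N := (fs.map totalDegree).prod with hN
  have hrad : ∀ i, t i ∈ I.radical := by
    intro i
    by_contra hcon
    have hti : t i ∈ maximalIdeal A := by rw [ht]; exact Ideal.subset_span ⟨i, rfl⟩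
    have := shf_list_count w fs hlen hd hf (N + 1) (fun j => (X i - C (x i)) ^ (j : ℕ)) (by
      intro c hc
      have hval : ∀ j : Fin (N + 1), aeval w ((X i - C (x i)) ^ (j : ℕ)) = t i ^ (j : ℕ) := by
        intro j; simp [hw]
      simp only [hval] at hc
      by_contra hne
      push Not at hne
      -- least nonzero coefficient
      have hex : ∃ j : ℕ, ∃ hj : j < N + 1, c ⟨j, hj⟩ ≠ 0 := by
        obtain ⟨j, hj⟩ := hne; exact ⟨j, j.2, hj⟩
      classical
      obtain ⟨hj0, hcj0⟩ := Nat.find_spec hex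
      have hmin : ∀ j : Fin (N + 1), (j : ℕ) < Nat.find hex → c j = 0 := by
        intro j hj
        have := Nat.find_min hex hj
        push Not at this
        exact this j.2
      set j0 := Nat.find hex
      have hdiv : ∃ b, ∑ j, c j • t i ^ (j : ℕ) =
          t i ^ j0 * (algebraMap ℂ A (c ⟨j0, hj0⟩) + t i * b) := by
        refine ⟨∑ j ∈ Finset.univ.erase ⟨j0, hj0⟩, c j • t i ^ ((j : ℕ) - j0 - 1), ?_⟩
        rw [← Finset.add_sum_erase _ _ (Finset.mem_univ (⟨j0, hj0⟩ : Fin (N + 1)))]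
        rw [mul_add, Algebra.smul_def, mul_comm, Finset.mul_sum, Finset.mul_sum]
        congr 1
        refine Finset.sum_congr rfl fun j hj => ?_
        by_cases hlt : (j : ℕ) < j0
        · rw [hmin j hlt]; simp
        · have hne : (j : ℕ) ≠ j0 := fun h => (Finset.mem_erase.mp hj).1 (Fin.ext h)
          rw [mul_smul_comm, mul_smul_comm, ← pow_succ', ← pow_add]
          congr 2
          omega
      obtain ⟨b, hb⟩ := hdiv
      rw [hb] at hc
      have hu : IsUnit (algebraMap ℂ A (c ⟨j0, hj0⟩) + t i * b) := by
        by_contra hnu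
        have h1 : algebraMap ℂ A (c ⟨j0, hj0⟩) + t i * b ∈ maximalIdeal A :=
          (mem_maximalIdeal _).mpr hnu
        have h2 : algebraMap ℂ A (c ⟨j0, hj0⟩) ∈ maximalIdeal A := by
          have := Ideal.sub_mem _ h1 (Ideal.mul_mem_right b _ hti)
          simpa using this
        exact (mem_maximalIdeal _).mp h2 ((IsUnit.mk0 _ hcj0).map (algebraMap ℂ A))
      exact hcon ⟨j0, (Ideal.mul_unit_mem_iff_mem I hu).mp hc⟩)
    omega
  have hmr : maximalIdeal A ≤ I.radical := by
    rw [ht, Ideal.span_le]; rintro _ ⟨i, rfl⟩; exact hrad i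
  obtain ⟨k, hk⟩ := Ideal.exists_pow_le_of_le_radical_of_fg hmr (IsNoetherian.noetherian _)
  have hrank : Module.rank ℂ (A ⧸ I) ≤ (N : ℕ) := by
    apply rank_le
    intro s hs
    let e := s.equivFin
    choose q hq using shf_approx t ht hres x k
    choose lift hlift using Ideal.Quotient.mk_surjective (I := I)
    have hs' : LinearIndependent ℂ (fun i : Fin s.card => ((e.symm i : s) : A ⧸ I)) :=
      hs.comp _ e.symm.injective
    refine shf_list_count w fs hlen hd hf s.card (fun i => q (lift (e.symm i))) ?_
    intro c hc
    rw [Fintype.linearIndependent_iff] at hs'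
    apply hs' c
    have hval : ∀ i : Fin s.card, ((e.symm i : s) : A ⧸ I) =
        Ideal.Quotient.mk I (aeval w (q (lift (e.symm i)))) := by
      intro i
      conv_lhs => rw [← hlift ((e.symm i : s) : A ⧸ I)]
      rw [Ideal.Quotient.eq, hw]
      exact hk (hq _)
    rw [← Ideal.Quotient.eq_zero_iff_mem] at hc
    rw [← hc, map_sum]
    refine Finset.sum_congr rfl fun i _ => ?_
    exact congrArg (c i • ·) (hval i)
  have hfin : Module.Finite ℂ (A ⧸ I) :=
    Module.rank_lt_aleph0_iff.mp (hrank.trans_lt (Cardinal.natCast_lt_aleph0))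
  refine ⟨hfin, ?_⟩
  rw [← Module.finrank_eq_rank] at hrank
  exact_mod_cast hrank

lemma shf_case_zero {A : Type} [CommRing A] [Algebra ℂ A] (I : Ideal A) (N : ℕ)
    (hfin : Module.Finite ℂ (A ⧸ I)) (hN : Module.finrank ℂ (A ⧸ I) ≤ N) (h : A) (e : ℕ)
    (he : h ^ e ∈ I) : h ^ N ∈ I := by
  have hker := Module.End.ker_pow_le_ker_pow_finrank (LinearMap.mulLeft ℂ (Ideal.Quotient.mk I h)) e
  have h1 : (1 : A ⧸ I) ∈ LinearMap.ker ((LinearMap.mulLeft ℂ (Ideal.Quotient.mk I h)) ^ e) := by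
    rw [LinearMap.mem_ker, LinearMap.pow_mulLeft, LinearMap.mulLeft_apply, mul_one, ← map_pow]
    exact Ideal.Quotient.eq_zero_iff_mem.mpr he
  have h2 := hker h1
  rw [LinearMap.mem_ker, LinearMap.pow_mulLeft, LinearMap.mulLeft_apply, mul_one, ← map_pow,
    Ideal.Quotient.eq_zero_iff_mem] at h2
  exact I.pow_mem_of_pow_mem h2 hN

lemma shf_case_one {A : Type} [CommRing A] [IsLocalRing A] [IsNoetherianRing A] [Algebra ℂ A]
    (I : Ideal A) (l : A) (hlm : l ∈ maximalIdeal A) (hl : ∀ b, l * b ∈ I → b ∈ I)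
    (N : ℕ) (hfin : Module.Finite ℂ (A ⧸ (I ⊔ Ideal.span {l})))
    (hN : Module.finrank ℂ (A ⧸ (I ⊔ Ideal.span {l})) ≤ N) (h : A) (e : ℕ)
    (he : h ^ e ∈ I) : h ^ N ∈ I := by
  by_contra hcon
  let K : ℕ → Ideal A := fun i => Submodule.comap (LinearMap.mulLeft A (h ^ i)) I
  have hK : ∀ i a, a ∈ K i ↔ h ^ i * a ∈ I := fun i a => Iff.rfl
  have hmono : ∀ i, K i ≤ K (i + 1) := by
    intro i a ha
    rw [hK] at *
    rw [pow_succ', mul_assoc]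
    exact Ideal.mul_mem_left _ _ ha
  have hIK : ∀ i, I ≤ K i := fun i a ha => Ideal.mul_mem_left _ _ ha
  let π : A →ₗ[ℂ] (A ⧸ (I ⊔ Ideal.span {l})) := (Ideal.Quotient.mkₐ ℂ _).toLinearMap
  let V : ℕ → Submodule ℂ (A ⧸ (I ⊔ Ideal.span {l})) :=
    fun i => ((K i).restrictScalars ℂ).map π
  have hVlt : ∀ i ≤ N, V i < V (i + 1) := by
    intro i hi
    refine lt_of_le_not_ge (Submodule.map_mono (hmono i)) ?_
    intro hle
    have hKle : K (i + 1) ≤ K i := by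
      apply Submodule.le_of_le_smul_of_le_jacobson_bot (I := maximalIdeal A)
        (IsNoetherian.noetherian _) (maximalIdeal_le_jacobson _)
      intro a ha
      have h1 : π a ∈ V i := hle ⟨a, ha, rfl⟩
      obtain ⟨k, hk, hka⟩ := h1
      have h2 : a - k ∈ I ⊔ Ideal.span {l} := by
        rw [← Ideal.Quotient.eq]; exact hka.symm
      obtain ⟨u, hu, v, hv, huv⟩ := Submodule.mem_sup.mp h2
      obtain ⟨b, rfl⟩ := Ideal.mem_span_singleton.mp hv
      have hk' : k ∈ K i := hk
      have h3 : l * b ∈ K (i + 1) := by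
        have : l * b = a - k - u := by rw [← huv]; ring
        rw [this]
        exact Ideal.sub_mem _ (Ideal.sub_mem _ ha (hmono i hk')) (hIK _ hu)
      have h4 : b ∈ K (i + 1) := by
        rw [hK] at *
        apply hl
        rw [mul_left_comm]; exact h3
      have h5 : a = (k + u) + l * b := by linear_combination -huv
      rw [h5]
      exact Submodule.add_mem_sup (Ideal.add_mem _ hk' (hIK _ hu)) (Ideal.mul_mem_mul hlm h4)
    have hdesc : ∀ j, h ^ (i + j) ∈ I → h ^ i ∈ I := by
      intro j
      induction j with
      | zero => exact id
      | succ j ih =>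
        intro hj
        apply ih
        have : h ^ j ∈ K (i + 1) := by
          rw [hK, ← pow_add]; convert hj using 2; ring
        have := hKle this
        rwa [hK, ← pow_add] at this
    apply hcon
    exact I.pow_mem_of_pow_mem (hdesc e (by rw [pow_add]; exact Ideal.mul_mem_left _ _ he)) hi
  have hrank : ∀ i ≤ N + 1, i ≤ Module.finrank ℂ (V i) := by
    intro i
    induction i with
    | zero => intro _; exact Nat.zero_le _
    | succ i ih =>
      intro hi
      have h1 := ih (by omega)
      have h2 := Submodule.finrank_lt_finrank_of_lt (hVlt i (by omega))
      omega
  have h1 := hrank (N + 1) le_rfl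
  have h2 := Submodule.finrank_le (V (N + 1))
  omega

lemma shf_ofList_append {A : Type} [CommRing A] (as : List A) (a : A) :
    Ideal.ofList (as ++ [a]) = Ideal.ofList as ⊔ Ideal.span {a} := by
  rw [Ideal.ofList_append, Ideal.ofList_singleton]

lemma shf_linear_poly {A : Type} [CommRing A] [IsLocalRing A] [Algebra ℂ A]
    {n : ℕ} (t : Fin n → A) (x : Fin n → ℂ) (w : Fin n → A)
    (hw : w = fun i => algebraMap ℂ A (x i) + t i) (c : Fin n → ℂ) (I : Ideal A) (hI : I ≠ ⊤)
    (hreg : ∀ b, (∑ i, c i • t i) * b ∈ I → b ∈ I) :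
    ∃ l : MvPolynomial (Fin n) ℂ, aeval w l = ∑ i, c i • t i ∧ l.totalDegree = 1 := by
  refine ⟨∑ i, c i • (X i - C (x i)), by simp [hw], ?_⟩
  set l : MvPolynomial (Fin n) ℂ := ∑ i, c i • (X i - C (x i)) with hl
  have hle : l.totalDegree ≤ 1 := by
    refine totalDegree_finsetSum_le fun i _ => ?_
    refine (totalDegree_smul_le _ _).trans ?_
    refine (totalDegree_sub_C_le _ _).trans ?_
    simp
  have hne : l.totalDegree ≠ 0 := by
    intro h0
    rw [totalDegree_eq_zero_iff_eq_C] at h0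
    have h1 : eval x l = 0 := by simp [hl]
    rw [h0, eval_C] at h1
    rw [h1, C_0] at h0
    have h2 : aeval w l = ∑ i, c i • t i := by simp [hl, hw]
    rw [h0, map_zero] at h2
    apply hI
    rw [Ideal.eq_top_iff_one]
    apply hreg
    rw [← h2, zero_mul]
    exact zero_mem _
  omega

lemma shf_main {A : Type} [CommRing A] [IsLocalRing A] [IsNoetherianRing A] [Algebra ℂ A]
    {n : ℕ} (t : Fin n → A) (ht : maximalIdeal A = Ideal.span (Set.range t))
    (htreg : IsWeaklyRegular A (List.ofFn t))
    (hres : ∀ a : A, ∃ c : ℂ, a - algebraMap ℂ A c ∈ maximalIdeal A)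
    (x : Fin n → ℂ) (w : Fin n → A) (hw : w = fun i => algebraMap ℂ A (x i) + t i) (r : ℕ) :
    ∀ (fs : List (MvPolynomial (Fin n) ℂ)), fs.length + r = n →
    (∀ f ∈ fs, 0 < f.totalDegree) → (∀ f ∈ fs, aeval w f ∈ maximalIdeal A) →
    (IsWeaklyRegular A (fs.map (aeval w))) →
    ∀ (h : A) (e : ℕ), h ^ e ∈ Ideal.ofList (fs.map (aeval w)) →
      h ^ (fs.map totalDegree).prod ∈ Ideal.ofList (fs.map (aeval w)) := by
  have hlin : ∀ c : Fin n → ℂ, ∑ i, c i • t i ∈ maximalIdeal A := by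
    intro c
    refine Ideal.sum_mem _ fun i _ => ?_
    rw [Algebra.smul_def, ht]
    exact Ideal.mul_mem_left _ _ (Ideal.subset_span ⟨i, rfl⟩)
  induction r with
  | zero =>
    intro fs hlen hd _ hf h e he
    obtain ⟨h1, h2⟩ := shf_dim t ht hres x w hw fs (by omega) hd hf
    exact shf_case_zero _ _ h1 h2 h e he
  | succ r ih =>
    intro fs hlen hd hm hf h e he
    set I := Ideal.ofList (fs.map (aeval w)) with hI
    set N := (fs.map totalDegree).prod with hN
    have hIm : I ≤ maximalIdeal A := by
      rw [hI, Ideal.ofList, Ideal.span_le]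
      intro a ha
      obtain ⟨f, hf', rfl⟩ := List.mem_map.mp ha
      exact hm f hf'
    have hItop : I ≠ ⊤ := fun htop => (maximalIdeal.isMaximal A).ne_top (top_le_iff.mp (htop ▸ hIm))
    -- appended data
    have happ : ∀ l : MvPolynomial (Fin n) ℂ, l.totalDegree = 1 → aeval w l ∈ maximalIdeal A →
        (∀ b, aeval w l * b ∈ I → b ∈ I) →
        (fs ++ [l]).length + r = n ∧ (∀ f ∈ fs ++ [l], 0 < f.totalDegree) ∧
        (∀ f ∈ fs ++ [l], aeval w f ∈ maximalIdeal A) ∧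
        IsWeaklyRegular A ((fs ++ [l]).map (aeval w)) ∧
        ((fs ++ [l]).map totalDegree).prod = N ∧
        Ideal.ofList ((fs ++ [l]).map (aeval w)) = I ⊔ Ideal.span {aeval w l} := by
      intro l hl1 hlm hlr
      refine ⟨by simp; omega, ?_, ?_, ?_, by simp [hN, hl1], ?_⟩
      · intro f hf'
        rcases List.mem_append.mp hf' with h | h
        · exact hd f h
        · rw [List.mem_singleton.mp h]; omega
      · intro f hf'
        rcases List.mem_append.mp hf' with h | h
        · exact hm f h
        · rw [List.mem_singleton.mp h]; exact hlm
      · rw [List.map_append, List.map_singleton, shf_append]; exact ⟨hf, hlr⟩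
      · rw [List.map_append, List.map_singleton, shf_ofList_append]
    rcases Nat.eq_zero_or_pos r with hr0 | hrpos
    · obtain ⟨c, hc, -⟩ := shf_exists_linear t ht htreg (fs.map (aeval w)) hf (by simp; omega)
        (fs.map (aeval w)) hf (by simp; omega)
      obtain ⟨l, hl, hl1⟩ := shf_linear_poly t x w hw c I hItop hc
      rw [← hl] at hc
      obtain ⟨a1, a2, a3, a4, a5, a6⟩ := happ l hl1 (hl ▸ hlin c) hc
      obtain ⟨h1, h2⟩ := shf_dim t ht hres x w hw (fs ++ [l]) (by omega) a2 a4
      rw [a5] at h2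
      rw [a6] at h1 h2
      exact shf_case_one I (aeval w l) (hl ▸ hlin c) hc N h1 h2 h e he
    · -- the inductive step through intersections
      have hgen : ∀ c : Fin n → ℂ, (∀ b, (∑ i, c i • t i) * b ∈ I → b ∈ I) →
          h ^ N ∈ I ⊔ Ideal.span {∑ i, c i • t i} := by
        intro c hc
        obtain ⟨l, hl, hl1⟩ := shf_linear_poly t x w hw c I hItop hc
        rw [← hl] at hc
        obtain ⟨a1, a2, a3, a4, a5, a6⟩ := happ l hl1 (hl ▸ hlin c) hc
        have := ih (fs ++ [l]) a1 a2 a3 a4 h e (by rw [a6]; exact Ideal.mem_sup_left he)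
        rw [a5, a6, hl] at this
        exact this
      have hk : ∀ k : ℕ, ∃ p : A, p ∈ maximalIdeal A ^ (k + 1) ∧ (∀ b, p * b ∈ I → b ∈ I) ∧
          h ^ N ∈ I ⊔ Ideal.span {p} := by
        intro k
        induction k with
        | zero =>
          obtain ⟨c, hc, -⟩ := shf_exists_linear t ht htreg (fs.map (aeval w)) hf (by simp; omega)
            (fs.map (aeval w)) hf (by simp; omega)
          exact ⟨∑ i, c i • t i, by simpa using hlin c, hc, hgen c hc⟩
        | succ k ihk =>
          obtain ⟨p, hpm, hpr, hpN⟩ := ihk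
          obtain ⟨c, hc, hc2⟩ := shf_exists_linear t ht htreg (fs.map (aeval w)) hf
            (by simp; omega) (fs.map (aeval w) ++ [p]) ((shf_append _ _).mpr ⟨hf, hpr⟩)
            (by simp; omega)
          rw [shf_ofList_append] at hc2
          set l := ∑ i, c i • t i with hl
          refine ⟨p * l, ?_, ?_, ?_⟩
          · rw [pow_succ]; exact Ideal.mul_mem_mul hpm (hlin c)
          · intro b hb
            rw [mul_assoc] at hb
            exact hc b (hpr _ hb)
          · obtain ⟨u, hu, v, hv, huv⟩ := Submodule.mem_sup.mp hpN
            obtain ⟨b, rfl⟩ := Ideal.mem_span_singleton.mp hv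
            obtain ⟨u', hu', v', hv', huv'⟩ := Submodule.mem_sup.mp (hgen c hc)
            obtain ⟨d, rfl⟩ := Ideal.mem_span_singleton.mp hv'
            have hld : l * d ∈ I ⊔ Ideal.span {p} := by
              have : l * d = (u - u') + p * b := by linear_combination huv' - huv
              rw [this]
              exact Submodule.add_mem_sup (Ideal.sub_mem _ hu hu')
                (Ideal.mem_span_singleton.mpr ⟨b, rfl⟩)
            obtain ⟨u2, hu2, v2, hv2, huv2⟩ := Submodule.mem_sup.mp (hc2 d hld)
            obtain ⟨d', rfl⟩ := Ideal.mem_span_singleton.mp hv2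
            have hb : b - l * d' ∈ I := by
              apply hpr
              have : p * (b - l * d') = u' - u + l * u2 := by
                linear_combination huv - huv' - l * huv2
              rw [this]
              exact Ideal.add_mem _ (Ideal.sub_mem _ hu' hu) (Ideal.mul_mem_left _ _ hu2)
            have : h ^ N = (u + p * (b - l * d')) + p * l * d' := by
              linear_combination -huv
            rw [this]
            exact Submodule.add_mem_sup (Ideal.add_mem _ hu (Ideal.mul_mem_left _ _ hb))
              (Ideal.mem_span_singleton.mpr ⟨d', rfl⟩)
      -- Krull
      have hnz : Ideal.Quotient.mk I (h ^ N) ∈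
          (⨅ i : ℕ, maximalIdeal A ^ i • ⊤ : Submodule A (A ⧸ I)) := by
        rw [Submodule.mem_iInf]
        intro i
        obtain ⟨p, hpm, -, hp⟩ := hk i
        obtain ⟨u, hu, v, hv, huv⟩ := Submodule.mem_sup.mp hp
        obtain ⟨b, rfl⟩ := Ideal.mem_span_singleton.mp hv
        have : Ideal.Quotient.mk I (h ^ N) = p • Ideal.Quotient.mk I b := by
          rw [← huv, map_add, Ideal.Quotient.eq_zero_iff_mem.mpr hu, zero_add, map_mul]
          rfl
        rw [this]
        exact Submodule.smul_mem_smul (Ideal.pow_le_pow_right (Nat.le_succ i) hpm) trivial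
      rw [Ideal.iInf_pow_smul_eq_bot_of_isLocalRing _ (maximalIdeal.isMaximal A).ne_top,
        Submodule.mem_bot, Ideal.Quotient.eq_zero_iff_mem] at hnz
      exact hnz

end

noncomputable section
open Filter Topology

abbrev ShfL (n : ℕ) : Type := lp (fun _ : Fin n → ℕ => ℂ) 1

def shfD {n : ℕ} (α : Fin n → ℕ) : ShfL n := lp.single 1 α (1 : ℂ)

lemma shf_norm_D {n : ℕ} (α : Fin n → ℕ) : ‖shfD α‖ = 1 := by
  simp [shfD, lp.norm_single]

lemma shf_hasSum_norm {n : ℕ} (b : ShfL n) : HasSum (fun α => ‖b α‖) ‖b‖ := by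
  have := lp.hasSum_norm (p := 1) (by simp) b
  simpa using this

lemma shf_hasSum_D {n : ℕ} (b : ShfL n) : HasSum (fun α => b α • shfD α) b := by
  have := lp.hasSum_single (p := 1) (by simp) b
  convert this using 2 with α
  rw [shfD, ← lp.single_smul]
  simp

section lift
variable {n : ℕ} {E : Type*} [NormedAddCommGroup E] [NormedSpace ℂ E] [CompleteSpace E]
set_option linter.unusedSectionVars false

lemma shf_lift_summable (v : (Fin n → ℕ) → E) (C : ℝ) (hC : ∀ α, ‖v α‖ ≤ C) (b : ShfL n) :
    Summable (fun α => ‖b α • v α‖) := by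
  refine Summable.of_nonneg_of_le (fun _ => norm_nonneg _) (fun α => ?_)
    ((shf_hasSum_norm b).summable.mul_right C)
  rw [norm_smul]
  exact mul_le_mul_of_nonneg_left (hC α) (norm_nonneg _)

lemma shf_lift_norm (v : (Fin n → ℕ) → E) (C : ℝ) (hC : ∀ α, ‖v α‖ ≤ C) (b : ShfL n) :
    ‖∑' α, b α • v α‖ ≤ C * ‖b‖ := by
  refine (norm_tsum_le_tsum_norm (shf_lift_summable v C hC b)).trans ?_
  rw [← (shf_hasSum_norm b).tsum_eq, mul_comm, ← tsum_mul_right]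
  refine (shf_lift_summable v C hC b).tsum_le_tsum (fun α => ?_)
    ((shf_hasSum_norm b).summable.mul_right C)
  rw [norm_smul]
  exact mul_le_mul_of_nonneg_left (hC α) (norm_nonneg _)

def shfLift (v : (Fin n → ℕ) → E) (C : ℝ) (hC : ∀ α, ‖v α‖ ≤ C) : ShfL n →L[ℂ] E :=
  LinearMap.mkContinuous
    { toFun := fun b => ∑' α, b α • v α
      map_add' := by
        intro b c
        rw [← Summable.tsum_add (shf_lift_summable v C hC b).of_norm
          (shf_lift_summable v C hC c).of_norm]
        simp [add_smul]
      map_smul' := by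
        intro a b
        simp only [lp.coeFn_smul, Pi.smul_apply, smul_assoc, RingHom.id_apply]
        rw [Summable.tsum_const_smul _ (shf_lift_summable v C hC b).of_norm] } C
    (fun b => shf_lift_norm v C hC b)

lemma shfLift_apply (v : (Fin n → ℕ) → E) (C : ℝ) (hC : ∀ α, ‖v α‖ ≤ C) (b : ShfL n) :
    shfLift v C hC b = ∑' α, b α • v α := rfl

lemma shfLift_D (v : (Fin n → ℕ) → E) (C : ℝ) (hC : ∀ α, ‖v α‖ ≤ C) (α : Fin n → ℕ) :
    shfLift v C hC (shfD α) = v α := by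
  rw [shfLift_apply, tsum_eq_single α]
  · simp [shfD]
  · intro β hβ
    rw [shfD, lp.single_apply_ne _ _ _ hβ, zero_smul]

lemma shfLift_norm_le (v : (Fin n → ℕ) → E) (C : ℝ) (hC : ∀ α, ‖v α‖ ≤ C) :
    ‖shfLift v C hC‖ ≤ C :=
  LinearMap.mkContinuous_norm_le _ ((norm_nonneg _).trans (hC 0)) _

lemma shf_clm_ext (S T : ShfL n →L[ℂ] E) (h : ∀ α, S (shfD α) = T (shfD α)) : S = T := by
  ext b
  have h1 := (shf_hasSum_D b).mapL S
  have h2 := (shf_hasSum_D b).mapL T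
  simp only [map_smul, h] at h1 h2
  exact h1.unique h2

end lift

def shfMon {n : ℕ} (t : Fin n → ℂ) (α : Fin n → ℕ) : ℂ := ∏ i, t i ^ α i

lemma shf_mon_norm {n : ℕ} (t : Fin n → ℂ) (ht : ∀ i, ‖t i‖ ≤ 1) (α : Fin n → ℕ) :
    ‖shfMon t α‖ ≤ 1 := by
  rw [shfMon, norm_prod]
  refine Finset.prod_le_one (fun _ _ => norm_nonneg _) fun i _ => ?_
  rw [norm_pow]
  exact pow_le_one₀ (norm_nonneg _) (ht i)

lemma shf_mon_add {n : ℕ} (t : Fin n → ℂ) (α β : Fin n → ℕ) :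
    shfMon t (α + β) = shfMon t α * shfMon t β := by
  simp [shfMon, pow_add, Finset.prod_mul_distrib]

def shfEv {n : ℕ} (b : ShfL n) (t : Fin n → ℂ) : ℂ := ∑' α, b α * shfMon t α

def shfEvL {n : ℕ} (t : Fin n → ℂ) (ht : ∀ i, ‖t i‖ ≤ 1) : ShfL n →L[ℂ] ℂ :=
  shfLift (shfMon t) 1 (shf_mon_norm t ht)

lemma shfEvL_apply {n : ℕ} (t : Fin n → ℂ) (ht : ∀ i, ‖t i‖ ≤ 1) (b : ShfL n) :
    shfEvL t ht b = shfEv b t := by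
  simp [shfEvL, shfLift_apply, shfEv]

/-- A word with prescribed letter multiplicities. -/
lemma shf_word {n : ℕ} (k : ℕ) : ∀ α : Fin n → ℕ, ∑ i, α i = k →
    ∃ w : Fin k → Fin n, ∀ y : Fin n → ℂ, ∏ j, y (w j) = shfMon y α := by
  induction k with
  | zero =>
    intro α hα
    refine ⟨Fin.elim0, fun y => ?_⟩
    have : ∀ i, α i = 0 := by simpa using hα
    simp [shfMon, this]
  | succ k ih =>
    intro α hα
    obtain ⟨i, hi⟩ : ∃ i, α i ≠ 0 := by
      by_contra h
      push Not at h
      simp [h] at hα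
    have hα' : α = (α - Pi.single i 1) + Pi.single i 1 := by
      ext j
      by_cases hj : j = i
      · subst hj; simp; omega
      · simp [hj]
    have hs : ∑ j, (α - Pi.single i 1 : Fin n → ℕ) j = k := by
      rw [hα'] at hα
      simp only [Pi.add_apply, Finset.sum_add_distrib, Finset.sum_pi_single', Finset.mem_univ,
        if_true] at hα
      simp at hα ⊢
      exact hα
    obtain ⟨w, hw⟩ := ih _ hs
    refine ⟨Fin.cons i w, fun y => ?_⟩
    rw [Fin.prod_univ_succ, hα', shf_mon_add, ← hw]
    simp only [Fin.cons_zero, Fin.cons_succ]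
    rw [mul_comm]
    congr 1
    rw [shfMon, Finset.prod_eq_single i]
    · simp
    · intro j _ hj; simp [hj]
    · simp

end

noncomputable section
open Filter Topology

lemma hasSum_congr_shf {f g : ℕ → ℂ} {a : ℂ} (h : ∀ k, f k = g k) :
    HasSum f a ↔ HasSum g a := by
  rw [funext h]

lemma shf_mult {n : ℕ} (k : ℕ) (α : Fin n → ℕ) :
    ∃ M : ContinuousMultilinearMap ℂ (fun _ : Fin k => (Fin n → ℂ)) ℂ, ‖M‖ ≤ 1 ∧
      (∑ i, α i = k → ∀ y, M (fun _ => y) = shfMon y α) := by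
  by_cases h : ∑ i, α i = k
  · obtain ⟨w, hw⟩ := shf_word k α h
    refine ⟨(ContinuousMultilinearMap.mkPiAlgebra ℂ (Fin k) ℂ).compContinuousLinearMap
      (fun j => ContinuousLinearMap.proj (w j)), ?_, ?_⟩
    · refine ContinuousMultilinearMap.opNorm_le_bound zero_le_one fun m => ?_
      simp only [ContinuousMultilinearMap.compContinuousLinearMap_apply,
        ContinuousLinearMap.proj_apply, ContinuousMultilinearMap.mkPiAlgebra_apply, norm_prod,
        one_mul]
      exact Finset.prod_le_prod (fun _ _ => norm_nonneg _) fun j _ => norm_le_pi_norm _ _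
    · intro _ y
      simp [hw]
  · exact ⟨0, by simp, fun h' => absurd h' h⟩

lemma shf_ev_summable {n : ℕ} (b : ShfL n) (t : Fin n → ℂ) (ht : ∀ i, ‖t i‖ ≤ 1) :
    Summable (fun α => b α * shfMon t α) := by
  simpa using (shf_lift_summable (shfMon t) 1 (shf_mon_norm t ht) b).of_norm

lemma shf_ev_analytic {n : ℕ} (b : ShfL n) : AnalyticAt ℂ (shfEv b) 0 := by
  choose M hM1 hM2 using fun (k : ℕ) (α : Fin n → ℕ) => shf_mult k α
  let p : FormalMultilinearSeries ℂ (Fin n → ℂ) ℂ :=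
    fun k => ∑ α ∈ Finset.piAntidiag Finset.univ k, b α • M k α
  refine ⟨p, 1, ?_, zero_lt_one, ?_⟩
  · have := p.le_radius_of_bound (r := 1) ‖b‖ (fun k => by
      simp only [NNReal.coe_one, one_pow, mul_one]
      refine (norm_sum_le _ _).trans ?_
      refine le_trans (Finset.sum_le_sum (g := fun α => ‖b α‖) fun α _ => ?_)
        (sum_le_hasSum _ (fun _ _ => norm_nonneg _) (shf_hasSum_norm b))
      rw [norm_smul]
      exact mul_le_of_le_one_right (norm_nonneg _) (hM1 k α))
    simpa using this
  · intro y hy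
    have hy' : ∀ i, ‖y i‖ ≤ 1 := by
      intro i
      have : ‖y‖ < 1 := by
        rw [mem_eball_zero_iff, ← ofReal_norm] at hy
        exact (ENNReal.ofReal_lt_one).mp hy
      exact (norm_le_pi_norm y i).trans this.le
    rw [zero_add]
    have h := (shf_ev_summable b y hy').hasSum.tsum_fiberwise (fun α : Fin n → ℕ => ∑ i, α i)
    change HasSum _ (∑' α, b α * shfMon y α)
    refine (hasSum_congr_shf fun k => ?_).mpr h
    have hset : (fun α : Fin n → ℕ => ∑ i, α i) ⁻¹' {k} =
        ((Finset.piAntidiag Finset.univ k : Finset (Fin n → ℕ)) : Set (Fin n → ℕ)) := by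
      ext α; simp
    rw [hset, Finset.tsum_subtype' (Finset.piAntidiag Finset.univ k) (fun α => b α * shfMon y α)]
    simp only [p, sum_apply, smul_apply]
    refine Finset.sum_congr rfl fun α hα => ?_
    rw [hM2 k α (by simpa using hα)]
    rfl

def shfP {n : ℕ} (i : Fin n) : ℕ := Nat.nth Nat.Prime i

lemma shf_P_prime {n : ℕ} (i : Fin n) : (shfP i).Prime := Nat.prime_nth_prime _

lemma shf_P_two {n : ℕ} (i : Fin n) : 2 ≤ shfP i := (shf_P_prime i).two_le

/-- Rescaled local coordinates at `x`. -/
def shfT {n : ℕ} (x : Fin n → ℂ) (s : ℕ) (z : Fin n → ℂ) : Fin n → ℂ :=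
  fun i => (shfP i : ℂ) ^ s * (z i - x i)

lemma shf_T_small {n : ℕ} (x : Fin n → ℂ) (s : ℕ) :
    ∀ᶠ z in 𝓝 x, ∀ i, ‖shfT x s z i‖ ≤ 1 := by
  rw [eventually_all]
  intro i
  have hc : ContinuousAt (fun z : Fin n → ℂ => ‖shfT x s z i‖) x := by
    exact (continuous_const.mul ((continuous_apply i).sub continuous_const)).norm.continuousAt
  have h0 : ‖shfT x s x i‖ = 0 := by simp [shfT]
  have := hc.eventually_lt (continuousAt_const (y := (1 : ℝ))) (by rw [h0]; exact zero_lt_one)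
  filter_upwards [this] with z hz using hz.le

lemma shf_G_analytic {n : ℕ} (x : Fin n → ℂ) (s : ℕ) (b : ShfL n) :
    AnalyticAt ℂ (fun z => shfEv b (shfT x s z)) x := by
  have h0 : shfT x s x = 0 := by ext i; simp [shfT]
  have h1 : AnalyticAt ℂ (shfT x s) x := by
    unfold shfT
    rw [analyticAt_pi_iff]
    intro i
    refine analyticAt_const.mul (AnalyticAt.sub ?_ analyticAt_const)
    exact (ContinuousLinearMap.proj (R := ℂ) (φ := fun _ : Fin n => ℂ) i).analyticAt x
  exact AnalyticAt.fun_comp (by rw [h0]; exact shf_ev_analytic b) h1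

lemma shf_expand {n : ℕ} (x : Fin n → ℂ) (f : (Fin n → ℂ) → ℂ) (hf : AnalyticAt ℂ f x) :
    ∃ s0 : ℕ, ∀ s ≥ s0, ∃ b : ShfL n, ∀ᶠ z in 𝓝 x, f z = shfEv b (shfT x s z) := by
  obtain ⟨p, r, hp⟩ := hf
  obtain ⟨ρ, hρ0, hρr⟩ := ENNReal.lt_iff_exists_nnreal_btwn.mp hp.r_pos
  have hρ : (0 : ℝ) < ρ := by exact_mod_cast hρ0
  obtain ⟨C, hC0, hC⟩ := p.norm_mul_pow_le_of_lt_radius (hρr.trans_le hp.r_le)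
  obtain ⟨s0, hs0⟩ := exists_nat_gt ((n : ℝ) / ρ)
  refine ⟨s0, fun s hs => ?_⟩
  let e : Fin n → (Fin n → ℂ) := fun i => Pi.single i 1
  let c : (Σ k, Fin k → Fin n) → ℂ := fun w => p w.1 (fun j => e (w.2 j))
  let cnt : (Σ k, Fin k → Fin n) → (Fin n → ℕ) :=
    fun w i => (Finset.univ.filter fun j => w.2 j = i).card
  have hcnt : ∀ (w : Σ k, Fin k → Fin n) (t : Fin n → ℂ), shfMon t (cnt w) = ∏ j, t (w.2 j) := by
    intro w t
    rw [shfMon, ← Finset.prod_fiberwise Finset.univ w.2 (fun j => t (w.2 j))]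
    refine Finset.prod_congr rfl fun i _ => ?_
    rw [Finset.prod_congr rfl (g := fun _ => t i) (fun j hj => by
      rw [(Finset.mem_filter.mp hj).2]), Finset.prod_const]
  let a : (Σ k, Fin k → Fin n) → ℂ := fun w => c w * (∏ j, (shfP (w.2 j) : ℂ) ^ s)⁻¹
  have he : ∀ i, ‖e i‖ ≤ 1 := by
    intro i
    refine (pi_norm_le_iff_of_nonneg zero_le_one).mpr fun j => ?_
    by_cases h : j = i
    · subst h; simp [e]
    · simp [e, h]
  have hcb : ∀ w, ‖c w‖ ≤ C * (1 / ρ) ^ w.1 := by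
    intro w
    have h1 : ‖c w‖ ≤ ‖p w.1‖ * ∏ j, ‖e (w.2 j)‖ := ContinuousMultilinearMap.le_opNorm _ _
    have h2 : ∏ j, ‖e (w.2 j)‖ ≤ 1 :=
      Finset.prod_le_one (fun _ _ => norm_nonneg _) fun j _ => he _
    have h3 := hC w.1
    calc ‖c w‖ ≤ ‖p w.1‖ := h1.trans (mul_le_of_le_one_right (norm_nonneg _) h2)
      _ = ‖p w.1‖ * ρ ^ w.1 * (1 / ρ) ^ w.1 := by
          rw [mul_assoc, ← mul_pow, mul_one_div_cancel hρ.ne', one_pow, mul_one]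
      _ ≤ C * (1 / ρ) ^ w.1 := by gcongr
  have hab : ∀ w, ‖a w‖ ≤ C * (1 / (ρ * 2 ^ s)) ^ w.1 := by
    intro w
    have h1 : ‖(∏ j, (shfP (w.2 j) : ℂ) ^ s)⁻¹‖ ≤ (1 / 2 ^ s) ^ w.1 := by
      rw [norm_inv, norm_prod, one_div, inv_pow]
      apply inv_anti₀ (by positivity)
      calc ((2:ℝ) ^ s) ^ w.1 = ∏ j : Fin w.1, (2 : ℝ) ^ s := by simp
        _ ≤ _ := by
          refine Finset.prod_le_prod (fun _ _ => by positivity) fun j _ => ?_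
          rw [norm_pow, Complex.norm_natCast]
          gcongr
          exact_mod_cast shf_P_two _
    calc ‖a w‖ = ‖c w‖ * ‖(∏ j, (shfP (w.2 j) : ℂ) ^ s)⁻¹‖ := norm_mul _ _
      _ ≤ C * (1 / ρ) ^ w.1 * (1 / 2 ^ s) ^ w.1 :=
          mul_le_mul (hcb w) h1 (norm_nonneg _) (by positivity)
      _ = C * (1 / (ρ * 2 ^ s)) ^ w.1 := by
          rw [mul_assoc, ← mul_pow, one_div_mul_one_div]
  have hq : (n : ℝ) * (1 / (ρ * 2 ^ s)) < 1 := by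
    have h2 : (s : ℝ) < 2 ^ s := by exact_mod_cast Nat.lt_two_pow_self
    have h3 : (s0 : ℝ) ≤ s := by exact_mod_cast hs
    rw [mul_one_div, div_lt_one (by positivity)]
    rw [div_lt_iff₀ hρ] at hs0
    nlinarith
  have hsum : Summable (fun w : Σ k, Fin k → Fin n => ‖a w‖) := by
    refine Summable.of_nonneg_of_le (fun _ => norm_nonneg _) hab ?_
    rw [summable_sigma_of_nonneg (fun _ => by positivity)]
    refine ⟨fun k => (hasSum_fintype _).summable, ?_⟩
    have : ∀ k : ℕ, ∑' w : Fin k → Fin n, C * (1 / (ρ * 2 ^ s) : ℝ) ^ k =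
        C * ((n : ℝ) * (1 / (ρ * 2 ^ s))) ^ k := by
      intro k
      rw [tsum_fintype]
      simp [mul_pow]
      ring
    simp only [this]
    exact (summable_geometric_of_lt_one (by positivity) hq).mul_left C
  have hsumD : Summable (fun w => a w • shfD (cnt w)) := by
    apply Summable.of_norm
    simpa [norm_smul, shf_norm_D] using hsum
  refine ⟨∑' w, a w • shfD (cnt w), ?_⟩
  have hball : ∀ᶠ z in 𝓝 x, z - x ∈ Metric.eball (0 : Fin n → ℂ) r := by
    have hc : ContinuousAt (fun z : Fin n → ℂ => z - x) x := by fun_prop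
    exact hc.eventually (by
      beta_reduce; rw [sub_self]; exact Metric.eball_mem_nhds _ hp.r_pos)
  filter_upwards [hball, shf_T_small x s] with z hz hT
  set y := z - x with hy
  have h1 := hp.hasSum hz
  have hzx : x + y = z := by rw [hy]; abel
  rw [hzx] at h1
  have h2 := hsumD.hasSum.mapL (shfEvL (shfT x s z) hT)
  have hterm : ∀ w, shfEvL (shfT x s z) hT (a w • shfD (cnt w)) = c w * ∏ j, y (w.2 j) := by
    intro w
    rw [map_smul, shfEvL, shfLift_D, hcnt]
    simp only [a, shfT, smul_eq_mul, Finset.prod_mul_distrib]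
    have hne : ∏ j, (shfP (w.2 j) : ℂ) ^ s ≠ 0 := by
      refine Finset.prod_ne_zero_iff.mpr fun j _ => pow_ne_zero _ ?_
      exact_mod_cast (shf_P_prime _).ne_zero
    rw [mul_assoc, inv_mul_cancel_left₀ hne]
    rfl
  simp only [hterm] at h2
  rw [shfEvL_apply] at h2
  have h3 := h2.sigma (fun k => hasSum_fintype _)
  refine h1.unique ?_
  refine (hasSum_congr_shf fun k => ?_).mpr h3
  have hyy : y = ∑ i, y i • e i := by
    ext j; simp [e, Pi.single_apply]
  have hpy : (p k fun _ => y) = p k fun _ => ∑ i, y i • e i := by rw [← hyy]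
  rw [hpy, ContinuousMultilinearMap.map_sum]
  refine Finset.sum_congr rfl fun w _ => ?_
  rw [ContinuousMultilinearMap.map_smul_univ, smul_eq_mul, mul_comm]

end

noncomputable section
open Filter Topology

def shfWt {n : ℕ} (α : Fin n → ℕ) : ℕ := ∏ i, shfP i ^ α i

lemma shf_wt_pos {n : ℕ} (α : Fin n → ℕ) : 0 < shfWt α :=
  Finset.prod_pos fun i _ => pow_pos (shf_P_prime i).pos _

lemma shf_P_inj {n : ℕ} {i j : Fin n} (h : shfP i = shfP j) : i = j :=
  Fin.ext (Nat.nth_injective Nat.infinite_setOfPred_prime h)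

lemma shf_wt_fact {n : ℕ} (α : Fin n → ℕ) (j : Fin n) : (shfWt α).factorization (shfP j) = α j := by
  rw [shfWt, Nat.factorization_prod (fun i _ => pow_ne_zero _ (shf_P_prime i).ne_zero)]
  simp only [Nat.factorization_pow, (shf_P_prime _).factorization, Finsupp.coe_finsetSum,
    Finset.sum_apply, Finsupp.smul_apply]
  rw [Finset.sum_eq_single j]
  · simp
  · intro i _ hi
    rw [Finsupp.single_eq_of_ne]
    · simp
    · intro h; exact hi (shf_P_inj h.symm)
  · simp

lemma shf_wt_inj {n : ℕ} {α β : Fin n → ℕ} (h : shfWt α = shfWt β) : α = β := by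
  ext j; rw [← shf_wt_fact α, ← shf_wt_fact β, h]

/-- The coordinate functional. -/
def shfCoord {n : ℕ} (α : Fin n → ℕ) : ShfL n →L[ℂ] ℂ :=
  shfLift (fun β => shfD β α) 1 (fun β => by
    by_cases h : α = β
    · subst h; simp [shfD]
    · rw [shfD, lp.single_apply_ne _ _ _ h]; simp)

lemma shfCoord_apply {n : ℕ} (α : Fin n → ℕ) (b : ShfL n) : shfCoord α b = b α := by
  rw [shfCoord, shfLift_apply, tsum_eq_single α]
  · simp [shfD]
  · intro β hβ
    rw [shfD, lp.single_apply_ne _ _ _ hβ.symm, smul_zero]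

lemma shf_D_self {n : ℕ} (α : Fin n → ℕ) : shfD α α = 1 := by simp [shfD]

lemma shf_D_ne {n : ℕ} {α β : Fin n → ℕ} (h : α ≠ β) : shfD β α = 0 := by
  rw [shfD, lp.single_apply_ne _ _ _ h]

/-- Rescaling. -/
def shfR {n : ℕ} (d : ℕ) : ShfL n →L[ℂ] ShfL n :=
  shfLift (fun α => ((shfWt α : ℂ) ^ d)⁻¹ • shfD α) 1 (fun α => by
    rw [norm_smul, shf_norm_D, mul_one, norm_inv, norm_pow, Complex.norm_natCast]
    apply inv_le_one_of_one_le₀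
    apply one_le_pow₀
    exact_mod_cast shf_wt_pos α)

lemma shfR_apply {n : ℕ} (d : ℕ) (b : ShfL n) (α : Fin n → ℕ) :
    shfR d b α = ((shfWt α : ℂ) ^ d)⁻¹ * b α := by
  have : (shfCoord α).comp (shfR d) = ((shfWt α : ℂ) ^ d)⁻¹ • shfCoord α := by
    apply shf_clm_ext
    intro β
    simp only [ContinuousLinearMap.comp_apply, smul_apply, shfR, shfLift_D, map_smul,
      shfCoord_apply, smul_eq_mul]
    by_cases h : α = β
    · subst h; rfl
    · rw [shf_D_ne h, mul_zero, mul_zero]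
  have h := congrArg (fun S => S b) this
  simpa [shfCoord_apply] using h

lemma shf_mon_mul {n : ℕ} (t u : Fin n → ℂ) (α : Fin n → ℕ) :
    shfMon (fun i => t i * u i) α = shfMon t α * shfMon u α := by
  simp [shfMon, mul_pow, Finset.prod_mul_distrib]

lemma shf_ev_R {n : ℕ} (x z : Fin n → ℂ) (s d : ℕ) (b : ShfL n) :
    shfEv (shfR d b) (shfT x (s + d) z) = shfEv b (shfT x s z) := by
  unfold shfEv
  refine tsum_congr fun α => ?_
  have h1 : shfT x (s + d) z = fun i => (shfP i : ℂ) ^ d * shfT x s z i := by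
    ext i; simp only [shfT, pow_add]; ring
  have h2 : shfMon (fun i : Fin n => (shfP i : ℂ) ^ d) α = (shfWt α : ℂ) ^ d := by
    simp only [shfMon, shfWt, Nat.cast_prod, Nat.cast_pow, ← Finset.prod_pow]
    refine Finset.prod_congr rfl fun i _ => ?_
    rw [← pow_mul, ← pow_mul, mul_comm]
  have h3 : (shfWt α : ℂ) ^ d ≠ 0 := pow_ne_zero _ (by exact_mod_cast (shf_wt_pos α).ne')
  rw [h1, shf_mon_mul, h2, shfR_apply]
  field_simp

section germ
variable {n : ℕ} (x : Fin n → ℂ)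

def shfGerm (f : (Fin n → ℂ) → ℂ) (hf : AnalyticAt ℂ f x) : HoloGermAt n x :=
  ⟨(f : Filter.Germ (nhds x) ℂ), f, hf, rfl⟩

lemma shf_germ_eq {f g : (Fin n → ℂ) → ℂ} (hf : AnalyticAt ℂ f x) (hg : AnalyticAt ℂ g x) :
    shfGerm x f hf = shfGerm x g hg ↔ f =ᶠ[𝓝 x] g := by
  exact Subtype.ext_iff.trans Filter.Germ.coe_eq

lemma shf_germ_surj (a : HoloGermAt n x) : ∃ f hf, a = shfGerm x f hf := by
  obtain ⟨a, f, hf, rfl⟩ := a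
  exact ⟨f, hf, rfl⟩

lemma shf_germ_mul {f g : (Fin n → ℂ) → ℂ} (hf : AnalyticAt ℂ f x) (hg : AnalyticAt ℂ g x) :
    shfGerm x f hf * shfGerm x g hg = shfGerm x (fun z => f z * g z) (hf.mul hg) := rfl

lemma shf_germ_add {f g : (Fin n → ℂ) → ℂ} (hf : AnalyticAt ℂ f x) (hg : AnalyticAt ℂ g x) :
    shfGerm x f hf + shfGerm x g hg = shfGerm x (fun z => f z + g z) (hf.add hg) := rfl

lemma shf_germ_sum {ι : Type*} (T : Finset ι) (f : ι → (Fin n → ℂ) → ℂ)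
    (hf : ∀ i, AnalyticAt ℂ (f i) x) :
    ∑ i ∈ T, shfGerm x (f i) (hf i) =
      shfGerm x (fun z => ∑ i ∈ T, f i z) (Finset.analyticAt_fun_sum T fun i _ => hf i) := by
  classical
  induction T using Finset.induction_on with
  | empty => rfl
  | insert i T hi ih =>
    rw [Finset.sum_insert hi, ih, shf_germ_add, shf_germ_eq]
    filter_upwards with z
    rw [Finset.sum_insert hi]

instance shfAlg : Algebra ℂ (HoloGermAt n x) :=
  RingHom.toAlgebra
    { toFun := fun c => shfGerm x (fun _ => c) analyticAt_const
      map_one' := rfl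
      map_mul' := fun _ _ => rfl
      map_zero' := rfl
      map_add' := fun _ _ => rfl }

lemma shf_algebraMap (c : ℂ) :
    algebraMap ℂ (HoloGermAt n x) c = shfGerm x (fun _ => c) analyticAt_const := rfl

def shfG (s : ℕ) (b : ShfL n) : HoloGermAt n x :=
  shfGerm x (fun z => shfEv b (shfT x s z)) (shf_G_analytic x s b)

lemma shf_G_surj (a : HoloGermAt n x) : ∃ s0 : ℕ, ∀ s ≥ s0, ∃ b : ShfL n, a = shfG x s b := by
  obtain ⟨f, hf, rfl⟩ := shf_germ_surj x a
  obtain ⟨s0, hs0⟩ := shf_expand x f hf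
  refine ⟨s0, fun s hs => ?_⟩
  obtain ⟨b, hb⟩ := hs0 s hs
  exact ⟨b, (shf_germ_eq x _ _).mpr hb⟩

lemma shf_G_R (s d : ℕ) (b : ShfL n) : shfG x (s + d) (shfR d b) = shfG x s b := by
  rw [shfG, shfG, shf_germ_eq]
  exact Eventually.of_forall fun z => shf_ev_R x z s d b

lemma shf_G_smul (s : ℕ) (c : ℂ) (b : ShfL n) : shfG x s (c • b) = algebraMap ℂ _ c * shfG x s b := by
  rw [shf_algebraMap, shfG, shfG, shf_germ_mul, shf_germ_eq]
  filter_upwards [shf_T_small x s] with z hz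
  rw [← shfEvL_apply _ hz, ← shfEvL_apply _ hz, map_smul, smul_eq_mul]

lemma shf_G_combo {ι : Type*} (T : Finset ι) (s : ℕ) (b r : ShfL n) (q u : ι → ShfL n)
    (h : ∀ t : Fin n → ℂ, (∀ i, ‖t i‖ ≤ 1) →
      shfEv b t = shfEv r t + ∑ i ∈ T, shfEv (q i) t * shfEv (u i) t) :
    shfG x s b = shfG x s r + ∑ i ∈ T, shfG x s (q i) * shfG x s (u i) := by
  simp only [shfG, shf_germ_mul]
  rw [shf_germ_sum x T (fun i z => shfEv (q i) (shfT x s z) * shfEv (u i) (shfT x s z))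
    (fun i => (shf_G_analytic x s (q i)).mul (shf_G_analytic x s (u i))), shf_germ_add, shf_germ_eq]
  filter_upwards [shf_T_small x s] with z hz
  exact h _ hz

lemma shf_normalize (s : ℕ) (b : ShfL n) (α : Fin n → ℕ) (h1 : b α = 1)
    (h0 : ∀ β, shfWt β < shfWt α → b β = 0) :
    ∃ s0, ∀ s' ≥ s0, ∃ u : ShfL n, shfG x s' u ∈ Ideal.span {shfG x s b} ∧
      ‖u - shfD α‖ ≤ 1 / 2 := by
  have ha : (0 : ℝ) < shfWt α := by exact_mod_cast shf_wt_pos α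
  set q : ℝ := shfWt α / (shfWt α + 1) with hq
  have hq0 : 0 ≤ q := by positivity
  have hq1 : q < 1 := by rw [hq, div_lt_one (by positivity)]; linarith
  have hlim : Tendsto (fun d : ℕ => ‖b‖ * q ^ d) atTop (𝓝 (‖b‖ * 0)) :=
    (tendsto_pow_atTop_nhds_zero_of_lt_one hq0 hq1).const_mul _
  rw [mul_zero] at hlim
  obtain ⟨d0, hd0⟩ := eventually_atTop.mp (hlim.eventually (gt_mem_nhds (b := (0:ℝ)) (a := 1/2)
    (by norm_num)))
  refine ⟨s + d0, fun s' hs' => ?_⟩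
  obtain ⟨d, hd, rfl⟩ : ∃ d, d0 ≤ d ∧ s' = s + d := ⟨s' - s, by omega, by omega⟩
  refine ⟨((shfWt α : ℂ) ^ d) • shfR d b, ?_, ?_⟩
  · rw [shf_G_smul, shf_G_R]
    exact Ideal.mul_mem_left _ _ (Ideal.mem_span_singleton_self _)
  · refine le_trans ?_ (hd0 d hd).le
    refine hasSum_le (fun β => ?_) (shf_hasSum_norm _) ((shf_hasSum_norm b).mul_right (q ^ d))
    have hval : ((shfWt α : ℂ) ^ d • shfR d b - shfD α) β =
        (shfWt α : ℂ) ^ d * (((shfWt β : ℂ) ^ d)⁻¹ * b β) - shfD α β := by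
      rw [← shfR_apply]; rfl
    rw [hval]
    by_cases hβ : β = α
    · subst hβ
      have h3 : (shfWt β : ℂ) ^ d ≠ 0 := pow_ne_zero _ (by exact_mod_cast (shf_wt_pos β).ne')
      rw [shf_D_self, h1, mul_one, mul_inv_cancel₀ h3, sub_self, norm_zero]
      positivity
    · rw [shf_D_ne hβ, sub_zero]
      rcases lt_trichotomy (shfWt β) (shfWt α) with hlt | heq | hgt
      · rw [h0 β hlt]; simp
      · exact absurd (shf_wt_inj heq) hβ
      · have hb : (0 : ℝ) < shfWt β := by exact_mod_cast shf_wt_pos β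
        rw [norm_mul, norm_mul, norm_inv, norm_pow, norm_pow, Complex.norm_natCast,
          Complex.norm_natCast, ← mul_assoc, ← inv_pow, ← mul_pow, mul_comm]
        refine mul_le_mul_of_nonneg_left ?_ (norm_nonneg _)
        refine pow_le_pow_left₀ (by positivity) ?_ _
        rw [hq, ← div_eq_mul_inv]
        refine div_le_div_of_nonneg_left ha.le (by positivity) ?_
        exact_mod_cast hgt

end germ

def shfShift {n : ℕ} (γ : Fin n → ℕ) : ShfL n →L[ℂ] ShfL n :=
  shfLift (fun α => shfD (α + γ)) 1 (fun α => (shf_norm_D _).le)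

lemma shf_ev_shift {n : ℕ} (γ : Fin n → ℕ) (t : Fin n → ℂ) (ht : ∀ i, ‖t i‖ ≤ 1) (b : ShfL n) :
    shfEvL t ht (shfShift γ b) = shfMon t γ * shfEvL t ht b := by
  have : (shfEvL t ht).comp (shfShift γ) = shfMon t γ • shfEvL t ht := by
    apply shf_clm_ext
    intro β
    simp only [ContinuousLinearMap.comp_apply, smul_apply, shfShift, shfEvL, shfLift_D,
      smul_eq_mul, shf_mon_add, mul_comm]
  exact congrArg (fun S => S b) this

lemma shf_division {n : ℕ} (T : Finset (Fin n → ℕ)) (u : (Fin n → ℕ) → ShfL n)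
    (hu : ∀ τ ∈ T, ‖u τ - shfD τ‖ ≤ 1 / 2) (b : ShfL n) :
    ∃ (r : ShfL n) (q : (Fin n → ℕ) → ShfL n), (∀ α, ∀ τ ∈ T, τ ≤ α → r α = 0) ∧
      ∀ t : Fin n → ℂ, (∀ i, ‖t i‖ ≤ 1) →
        shfEv b t = shfEv r t + ∑ τ ∈ T, shfEv (q τ) t * shfEv (u τ) t := by
  classical
  let up : (Fin n → ℕ) → Prop := fun α => ∃ τ ∈ T, τ ≤ α
  let tau : (Fin n → ℕ) → (Fin n → ℕ) := fun α => if h : up α then h.choose else 0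
  have htau : ∀ α, up α → tau α ∈ T ∧ tau α ≤ α := by
    intro α h
    simp only [tau, dif_pos h]
    exact h.choose_spec
  let v : (Fin n → ℕ) → ShfL n := fun β =>
    if up β then shfShift (β - tau β) (u (tau β)) else shfD β
  have hv : ∀ β, ‖shfD β - v β‖ ≤ 1 / 2 := by
    intro β
    by_cases h : up β
    · simp only [v, if_pos h]
      have h1 : shfD β = shfShift (β - tau β) (shfD (tau β)) := by
        rw [shfShift, shfLift_D, add_tsub_cancel_of_le (htau β h).2]
      rw [h1, ← map_sub]
      refine (ContinuousLinearMap.le_opNorm _ _).trans ?_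
      calc _ ≤ 1 * ‖shfD (tau β) - u (tau β)‖ :=
            mul_le_mul_of_nonneg_right (shfLift_norm_le _ _ _) (norm_nonneg _)
        _ ≤ 1 / 2 := by rw [one_mul, norm_sub_rev]; exact hu _ (htau β h).1
    · simp only [v, if_neg h]; simp
  let W := shfLift (fun β => shfD β - v β) (1 / 2) hv
  have hW : ‖W‖ < 1 := (shfLift_norm_le _ _ _).trans_lt (by norm_num)
  obtain ⟨b', hb'⟩ : ∃ b', b' - W b' = b := by
    obtain ⟨U, hU⟩ := isUnit_one_sub_of_norm_lt_one hW
    refine ⟨(↑U⁻¹ : ShfL n →L[ℂ] ShfL n) b, ?_⟩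
    have h1 : (U : ShfL n →L[ℂ] ShfL n) * ↑U⁻¹ = 1 := U.mul_inv
    rw [hU] at h1
    exact congrArg (fun S : ShfL n →L[ℂ] ShfL n => S b) h1
  have hr : ∀ β : Fin n → ℕ, ‖(if up β then 0 else shfD β : ShfL n)‖ ≤ 1 := by
    intro β; split_ifs <;> simp [shf_norm_D]
  let r := shfLift _ 1 hr
  have hq : ∀ τ β : Fin n → ℕ,
      ‖(if up β ∧ tau β = τ then shfD (β - τ) else 0 : ShfL n)‖ ≤ 1 := by
    intro τ β; split_ifs <;> simp [shf_norm_D]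
  let q := fun τ => shfLift _ 1 (hq τ)
  refine ⟨r b', fun τ => q τ b', ?_, ?_⟩
  · intro α τ hτ hle
    have : (shfCoord α).comp r = 0 := by
      apply shf_clm_ext
      intro β
      simp only [ContinuousLinearMap.comp_apply, r, shfLift_D, shfCoord_apply]
      split_ifs with h
      · rfl
      · refine shf_D_ne ?_
        rintro rfl
        exact h ⟨τ, hτ, hle⟩
    rw [← shfCoord_apply]
    exact congrArg (fun S => S b') this
  · intro t ht
    have : (shfEvL t ht).comp (1 - W) = (shfEvL t ht).comp r +
        ∑ τ ∈ T, shfEvL t ht (u τ) • (shfEvL t ht).comp (q τ) := by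
      apply shf_clm_ext
      intro β
      simp only [ContinuousLinearMap.comp_apply, add_apply, sum_apply, smul_apply, sub_apply,
        one_apply_eq_self, W, r, q, shfLift_D, sub_sub_cancel]
      by_cases h : up β
      · simp only [v, if_pos h, h, true_and]
        rw [Finset.sum_eq_single (tau β)]
        · rw [shf_ev_shift]
          simp [shfEvL, shfLift_D, mul_comm]
        · intro τ _ hτ
          simp [hτ.symm]
        · intro h'; exact absurd (htau β h).1 h'
      · simp only [v, if_neg h, h, false_and, if_false]
        simp
    have h2 := congrArg (fun S => S b') this
    simp only [ContinuousLinearMap.comp_apply, add_apply, sum_apply, smul_apply, sub_apply,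
      shfEvL_apply, smul_eq_mul] at h2
    rw [show (1 : ShfL n →L[ℂ] ShfL n) b' = b' from rfl, hb'] at h2
    rw [h2]
    congr 1
    exact Finset.sum_congr rfl fun τ _ => mul_comm _ _

theorem shf_noetherian {n : ℕ} (x : Fin n → ℂ) : IsNoetherianRing (HoloGermAt n x) := by
  classical
  rw [isNoetherianRing_iff_ideal_fg]
  intro I
  let LM : Set (Fin n → ℕ) := {α | ∃ s b, shfG x s b ∈ I ∧ b α = 1 ∧
    ∀ β, shfWt β < shfWt α → b β = 0}
  have hfin : {α | Minimal (· ∈ LM) α}.Finite :=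
    WellQuasiOrderedLE.finite_of_isAntichain (setOfPred_minimal_antichain _)
  have hmin : ∀ α ∈ LM, ∃ τ ∈ hfin.toFinset, τ ≤ α := by
    intro α hα
    obtain ⟨τ, h1, h2⟩ := exists_minimal_le_of_wellFoundedLT (· ∈ LM) α hα
    exact ⟨τ, by simpa using h2, h1⟩
  have hT : ∀ τ ∈ hfin.toFinset, τ ∈ LM := by
    intro τ hτ
    have : Minimal (· ∈ LM) τ := by simpa using hτ
    exact this.prop
  set T := hfin.toFinset
  have hgen : ∀ τ : Fin n → ℕ, ∃ g ∈ I, τ ∈ T → ∃ s0, ∀ s' ≥ s0, ∃ u : ShfL n,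
      shfG x s' u ∈ Ideal.span {g} ∧ ‖u - shfD τ‖ ≤ 1 / 2 := by
    intro τ
    by_cases hτ : τ ∈ T
    · obtain ⟨s, b, h1, h2, h3⟩ := hT τ hτ
      exact ⟨_, h1, fun _ => shf_normalize x s b τ h2 h3⟩
    · exact ⟨0, zero_mem _, fun h => absurd h hτ⟩
  choose g hgI hg using hgen
  refine ⟨T.image g, le_antisymm ?_ ?_⟩
  · rw [Ideal.span_le]
    intro a ha
    obtain ⟨τ, _, rfl⟩ := Finset.mem_image.mp ha
    exact hgI τ
  · intro a ha
    choose! s0 hs0 using hg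
    obtain ⟨s1, hs1⟩ := shf_G_surj x a
    obtain ⟨b, rfl⟩ := hs1 (s1 + ∑ τ ∈ T, s0 τ) (by omega)
    set s := s1 + ∑ τ ∈ T, s0 τ
    have hs : ∀ τ ∈ T, s ≥ s0 τ := fun τ hτ => by
      have := Finset.single_le_sum (f := s0) (fun _ _ => Nat.zero_le _) hτ
      omega
    have : ∀ τ, ∃ u : ShfL n, τ ∈ T → shfG x s u ∈ Ideal.span {g τ} ∧ ‖u - shfD τ‖ ≤ 1 / 2 := by
      intro τ
      by_cases hτ : τ ∈ T
      · obtain ⟨u, hu⟩ := hs0 τ hτ s (hs τ hτ)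
        exact ⟨u, fun _ => hu⟩
      · exact ⟨0, fun h => absurd h hτ⟩
    choose u hu using this
    obtain ⟨r, q, hr, hq⟩ := shf_division T u (fun τ hτ => (hu τ hτ).2) b
    have hcombo := shf_G_combo x T s b r q u hq
    have huspan : ∀ τ ∈ T, shfG x s (q τ) * shfG x s (u τ) ∈
        Ideal.span ((T.image g : Finset _) : Set (HoloGermAt n x)) := by
      intro τ hτ
      refine Ideal.mul_mem_left _ _ (Ideal.span_mono ?_ (hu τ hτ).1)
      simpa using ⟨τ, hτ, rfl⟩
    have hle : Ideal.span ((T.image g : Finset _) : Set (HoloGermAt n x)) ≤ I := by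
      rw [Ideal.span_le]
      intro a ha
      obtain ⟨τ, _, rfl⟩ := Finset.mem_image.mp ha
      exact hgI τ
    have hrI : shfG x s r ∈ I := by
      rw [eq_sub_of_add_eq hcombo.symm]
      exact I.sub_mem ha (I.sum_mem fun τ hτ => hle (huspan τ hτ))
    have hr0 : r = 0 := by
      by_contra hne
      have hex : ∃ k, ∃ α, shfWt α = k ∧ r α ≠ 0 := by
        by_contra h
        push Not at h
        apply hne
        ext α
        exact h _ α rfl
      obtain ⟨α, hα, hrα⟩ := Nat.find_spec hex
      have hαLM : α ∈ LM := by
        refine ⟨s, (r α)⁻¹ • r, ?_, ?_, ?_⟩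
        · rw [shf_G_smul]; exact I.mul_mem_left _ hrI
        · exact inv_mul_cancel₀ hrα
        · intro β hβ
          have := Nat.find_min hex (hα ▸ hβ)
          push Not at this
          change (r α)⁻¹ * r β = 0
          rw [this β rfl, mul_zero]
      obtain ⟨τ, hτ, hle⟩ := hmin α hαLM
      exact hrα (hr α τ hτ hle)
    have hz : shfG x s (0 : ShfL n) = 0 := by
      have := shf_G_smul x s 0 (0 : ShfL n)
      rwa [zero_smul, map_zero, zero_mul] at this
    rw [hcombo, hr0, hz, zero_add]
    exact Ideal.sum_mem _ huspan

end

noncomputable section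
open Filter Topology RingTheory.Sequence IsLocalRing

section germ
variable {n : ℕ} (x : Fin n → ℂ)

lemma shf_coord_analytic (i : Fin n) : AnalyticAt ℂ (fun z : Fin n → ℂ => z i - x i) x :=
  ((ContinuousLinearMap.proj (R := ℂ) (φ := fun _ : Fin n => ℂ) i).analyticAt x).sub
    analyticAt_const

def shfCo (i : Fin n) : HoloGermAt n x := shfGerm x (fun z => z i - x i) (shf_coord_analytic x i)

def shfProj (K : Finset (Fin n)) (z : Fin n → ℂ) : Fin n → ℂ := fun i => if i ∈ K then x i else z i

lemma shf_proj_cont (K : Finset (Fin n)) : Continuous (shfProj x K) := by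
  refine continuous_pi fun i => ?_
  by_cases h : i ∈ K
  · simp only [shfProj, if_pos h]; exact continuous_const
  · simp only [shfProj, if_neg h]; exact continuous_apply i

lemma shf_proj_tendsto (K : Finset (Fin n)) : Tendsto (shfProj x K) (𝓝 x) (𝓝 x) := by
  have := (shf_proj_cont x K).tendsto x
  have h : shfProj x K x = x := by ext i; simp [shfProj]
  rwa [h] at this

lemma shf_vanish_of_mem (K : Finset (Fin n)) (a : HoloGermAt n x)
    (ha : a ∈ Ideal.span (shfCo x '' (K : Set (Fin n)))) :
    ∃ f hf, a = shfGerm x f hf ∧ ∀ᶠ z in 𝓝 x, f (shfProj x K z) = 0 := by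
  induction ha using Submodule.span_induction with
  | mem a h =>
    obtain ⟨i, hi, rfl⟩ := h
    refine ⟨_, _, rfl, Eventually.of_forall fun z => ?_⟩
    have : i ∈ K := hi
    simp [shfProj, this]
  | zero => exact ⟨fun _ => 0, analyticAt_const, rfl, Eventually.of_forall fun z => rfl⟩
  | add a b _ _ iha ihb =>
    obtain ⟨f, hf, rfl, h1⟩ := iha
    obtain ⟨g, hg, rfl, h2⟩ := ihb
    refine ⟨_, _, shf_germ_add x hf hg, ?_⟩
    filter_upwards [h1, h2] with z h1 h2
    rw [h1, h2, add_zero]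
  | smul c a _ ih =>
    obtain ⟨f, hf, rfl, h1⟩ := ih
    obtain ⟨g, hg, rfl⟩ := shf_germ_surj x c
    refine ⟨_, _, shf_germ_mul x hg hf, ?_⟩
    filter_upwards [h1] with z h1
    rw [h1, mul_zero]

lemma shf_mon_single (t : Fin n → ℂ) (i : Fin n) : shfMon t (Pi.single i 1) = t i := by
  rw [shfMon, Finset.prod_eq_single i]
  · simp
  · intro j _ hj; simp [hj]
  · simp

lemma shf_ev_D (t : Fin n → ℂ) (α : Fin n → ℕ) : shfEv (shfD α) t = shfMon t α := by
  rw [shfEv, tsum_eq_single α]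
  · rw [shf_D_self, one_mul]
  · intro β hβ; rw [shf_D_ne hβ, zero_mul]

lemma shf_mem_of_vanish (K : Finset (Fin n)) (f : (Fin n → ℂ) → ℂ) (hf : AnalyticAt ℂ f x)
    (hv : ∀ᶠ z in 𝓝 x, f (shfProj x K z) = 0) :
    shfGerm x f hf ∈ Ideal.span (shfCo x '' (K : Set (Fin n))) := by
  classical
  obtain ⟨s, hs⟩ := shf_expand x f hf
  obtain ⟨b, hb⟩ := hs s le_rfl
  set T : Finset (Fin n → ℕ) := K.image (fun i => Pi.single i 1) with hT
  obtain ⟨r, q, hr, hq⟩ := shf_division T shfD (fun τ _ => by simp) b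
  have hcombo := shf_G_combo x T s b r q shfD hq
  have hfb : shfGerm x f hf = shfG x s b := (shf_germ_eq x _ _).mpr hb
  rw [hfb, hcombo]
  have hr0 : shfG x s r = 0 := by
    have : (0 : HoloGermAt n x) = shfGerm x (fun _ => 0) analyticAt_const := rfl
    rw [this, shfG, shf_germ_eq]
    have hp := shf_proj_tendsto x K
    filter_upwards [hv, hp.eventually hb, hp.eventually (shf_T_small x s)] with z h1 h2 h3
    rw [h1, hq _ h3, Finset.sum_eq_zero, add_zero] at h2
    · rw [h2]
      unfold shfEv
      refine tsum_congr fun α => ?_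
      by_cases hα : ∃ i ∈ K, α i ≠ 0
      · obtain ⟨i, hi, hi0⟩ := hα
        rw [hr α (Pi.single i 1) (Finset.mem_image_of_mem _ hi), zero_mul, zero_mul]
        intro j
        by_cases hj : j = i
        · subst hj; simp; omega
        · simp [hj]
      · push Not at hα
        congr 1
        refine Finset.prod_congr rfl fun i _ => ?_
        by_cases hi : i ∈ K
        · rw [hα i hi, pow_zero, pow_zero]
        · simp [shfT, shfProj, hi]
    · intro τ hτ
      obtain ⟨i, hi, rfl⟩ := Finset.mem_image.mp hτ
      rw [shf_ev_D, shf_mon_single]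
      simp [shfT, shfProj, hi]
  rw [hr0, zero_add]
  refine Ideal.sum_mem _ fun τ hτ => Ideal.mul_mem_left _ _ ?_
  obtain ⟨i, hi, rfl⟩ := Finset.mem_image.mp hτ
  have : shfG x s (shfD (Pi.single i 1)) = algebraMap ℂ _ ((shfP i : ℂ) ^ s) * shfCo x i := by
    rw [shf_algebraMap, shfG, shfCo, shf_germ_mul, shf_germ_eq]
    filter_upwards with z
    rw [shf_ev_D, shf_mon_single]; rfl
  rw [this]
  exact Ideal.mul_mem_left _ _ (Ideal.subset_span ⟨i, hi, rfl⟩)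

lemma shf_isUnit_iff (f : (Fin n → ℂ) → ℂ) (hf : AnalyticAt ℂ f x) :
    IsUnit (shfGerm x f hf) ↔ f x ≠ 0 := by
  constructor
  · intro h h0
    obtain ⟨b, hb⟩ := h.exists_right_inv
    obtain ⟨g, hg, rfl⟩ := shf_germ_surj x b
    have h1 : (1 : HoloGermAt n x) = shfGerm x (fun _ => 1) analyticAt_const := rfl
    rw [h1, shf_germ_mul, shf_germ_eq] at hb
    have := hb.self_of_nhds
    simp [h0] at this
  · intro h0
    refine IsUnit.of_mul_eq_one (shfGerm x (fun z => (f z)⁻¹) (hf.inv h0)) ?_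
    have h1 : (1 : HoloGermAt n x) = shfGerm x (fun _ => 1) analyticAt_const := rfl
    rw [h1, shf_germ_mul, shf_germ_eq]
    filter_upwards [hf.continuousAt.eventually_ne h0] with z hz
    exact mul_inv_cancel₀ hz

instance shf_local : IsLocalRing (HoloGermAt n x) := by
  have : Nontrivial (HoloGermAt n x) := by
    refine ⟨⟨0, 1, fun h => ?_⟩⟩
    have := (shf_germ_eq x (f := fun _ => 0) (g := fun _ => 1) analyticAt_const
      analyticAt_const).mp h
    simpa using this.self_of_nhds
  refine IsLocalRing.of_nonunits_add fun a b ha hb => ?_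
  obtain ⟨f, hf, rfl⟩ := shf_germ_surj x a
  obtain ⟨g, hg, rfl⟩ := shf_germ_surj x b
  rw [mem_nonunits_iff, shf_isUnit_iff, not_not] at ha hb
  rw [shf_germ_add, mem_nonunits_iff, shf_isUnit_iff, not_not, ha, hb, add_zero]

lemma shf_mem_max (f : (Fin n → ℂ) → ℂ) (hf : AnalyticAt ℂ f x) :
    shfGerm x f hf ∈ maximalIdeal (HoloGermAt n x) ↔ f x = 0 := by
  rw [mem_maximalIdeal, mem_nonunits_iff, shf_isUnit_iff, not_not]

lemma shf_max : maximalIdeal (HoloGermAt n x) = Ideal.span (Set.range (shfCo x)) := by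
  apply le_antisymm
  · intro a ha
    obtain ⟨f, hf, rfl⟩ := shf_germ_surj x a
    rw [shf_mem_max] at ha
    have := shf_mem_of_vanish x Finset.univ f hf (Eventually.of_forall fun z => by
      have : shfProj x Finset.univ z = x := by ext i; simp [shfProj]
      rw [this, ha])
    simpa using this
  · rw [Ideal.span_le]
    rintro _ ⟨i, rfl⟩
    exact (shf_mem_max x _ _).mpr (sub_self _)

lemma shf_res (a : HoloGermAt n x) :
    ∃ c : ℂ, a - algebraMap ℂ _ c ∈ maximalIdeal (HoloGermAt n x) := by
  obtain ⟨f, hf, rfl⟩ := shf_germ_surj x a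
  refine ⟨f x, ?_⟩
  have : shfGerm x f hf - algebraMap ℂ _ (f x) =
      shfGerm x (fun z => f z - f x) (hf.sub analyticAt_const) := rfl
  rw [this, shf_mem_max, sub_self]

lemma shf_co_reg (K : Finset (Fin n)) (k : Fin n) (hk : k ∉ K) (b : HoloGermAt n x)
    (hb : shfCo x k * b ∈ Ideal.span (shfCo x '' (K : Set (Fin n)))) :
    b ∈ Ideal.span (shfCo x '' (K : Set (Fin n))) := by
  obtain ⟨f, hf, rfl⟩ := shf_germ_surj x b
  obtain ⟨g, hg, hgf, hg0⟩ := shf_vanish_of_mem x K _ hb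
  rw [shfCo, shf_germ_mul, shf_germ_eq] at hgf
  apply shf_mem_of_vanish
  have hp := shf_proj_tendsto x K
  have h1 : ∀ᶠ z in 𝓝 x, (z k - x k) * f (shfProj x K z) = 0 := by
    filter_upwards [hg0, hp.eventually hgf] with z h1 h2
    rw [h1] at h2
    simpa [shfProj, hk] using h2
  have h2 : ∀ᶠ z in 𝓝 x, ContinuousAt f (shfProj x K z) :=
    hp.eventually hf.eventually_continuousAt
  filter_upwards [eventually_eventually_nhds.mpr h1, h2] with z hz hcont
  by_cases hzk : z k - x k = 0
  · have hu : Tendsto (fun c : ℂ => Function.update z k c) (𝓝[≠] (z k)) (𝓝 z) := by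
      have h3 : ContinuousAt (fun c : ℂ => Function.update z k c) (z k) :=
        (continuous_const.update k continuous_id).continuousAt
      have h4 := h3.tendsto.mono_left (nhdsWithin_le_nhds (s := {z k}ᶜ))
      rwa [Function.update_eq_self] at h4
    have hF : Tendsto (fun c : ℂ => f (shfProj x K (Function.update z k c))) (𝓝[≠] (z k))
        (𝓝 (f (shfProj x K z))) :=
      hcont.tendsto.comp (((shf_proj_cont x K).tendsto z).comp hu)
    have h0 : (fun c : ℂ => f (shfProj x K (Function.update z k c))) =ᶠ[𝓝[≠] (z k)]
        fun _ => 0 := by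
      filter_upwards [hu.eventually hz, self_mem_nhdsWithin] with c hc hne
      rw [Function.update_self] at hc
      refine (mul_eq_zero.mp hc).resolve_left ?_
      intro h
      apply hne
      have : c = x k := sub_eq_zero.mp h
      rw [Set.mem_singleton_iff, this, sub_eq_zero.mp hzk]
    exact tendsto_nhds_unique hF (tendsto_const_nhds.congr' h0.symm)
  · exact (mul_eq_zero.mp hz.self_of_nhds).resolve_left hzk

lemma shf_co_weaklyRegular : IsWeaklyRegular (HoloGermAt n x) (List.ofFn (shfCo x)) := by
  refine ⟨fun i hi => ?_⟩
  have hi' : i < n := by simpa using hi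
  rw [shf_reg_iff]
  have hI : Ideal.ofList ((List.ofFn (shfCo x)).take i) =
      Ideal.span (shfCo x '' ((Finset.univ.filter fun j : Fin n => (j : ℕ) < i) : Set (Fin n))) := by
    rw [Ideal.ofList]
    congr 1
    ext a
    simp only [Set.mem_setOf_eq, List.mem_take_iff_getElem, List.getElem_ofFn, Set.mem_image,
      Finset.coe_filter, Finset.mem_univ, true_and, List.length_ofFn]
    constructor
    · rintro ⟨j, hj, rfl⟩
      exact ⟨⟨j, by omega⟩, by simp; omega, rfl⟩
    · rintro ⟨j, hj, rfl⟩
      exact ⟨j, by omega, rfl⟩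
  rw [hI, List.getElem_ofFn]
  intro b hb
  exact shf_co_reg x _ _ (by simp) b hb

lemma shf_aeval (w : Fin n → HoloGermAt n x)
    (hw : w = fun i => algebraMap ℂ (HoloGermAt n x) (x i) + shfCo x i)
    (p : MvPolynomial (Fin n) ℂ) :
    ((MvPolynomial.aeval w p : HoloGermAt n x) : Filter.Germ (𝓝 x) ℂ) =
      ((fun z => MvPolynomial.eval z p : (Fin n → ℂ) → ℂ) : Filter.Germ (𝓝 x) ℂ) := by
  induction p using MvPolynomial.induction_on with
  | C c =>
    rw [MvPolynomial.algHom_C]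
    simp only [MvPolynomial.eval_C]
    rfl
  | add p q hp hq =>
    rw [map_add, Subring.coe_add, hp, hq]
    simp only [map_add]
    rfl
  | mul_X p i hp =>
    rw [map_mul, Subring.coe_mul, hp, MvPolynomial.aeval_X]
    have hwi : ((w i : HoloGermAt n x) : Filter.Germ (𝓝 x) ℂ) =
        ((fun z => z i : (Fin n → ℂ) → ℂ) : Filter.Germ (𝓝 x) ℂ) := by
      rw [hw]
      change (((fun z => x i + (z i - x i)) : (Fin n → ℂ) → ℂ) : Filter.Germ (𝓝 x) ℂ) = _
      simp
    rw [hwi]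
    simp only [map_mul, MvPolynomial.eval_X]
    rfl

end germ

lemma shf_vandermonde {A : Type} [CommRing A] [Algebra ℂ A] (I : Ideal A) (d : ℕ) (a : ℕ → A)
    (h : ∀ c : ℂ, ∑ k ∈ Finset.range d, c ^ k • a k ∈ I) : ∀ k < d, a k ∈ I := by
  intro k hk
  rw [← Ideal.Quotient.eq_zero_iff_mem]
  rw [← Module.forall_dual_apply_eq_zero_iff ℂ]
  intro φ
  let P : Polynomial ℂ := ∑ k ∈ Finset.range d, Polynomial.monomial k (φ (Ideal.Quotient.mk I (a k)))
  have hP : P = 0 := by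
    apply Polynomial.funext
    intro c
    have h1 := congrArg φ (Ideal.Quotient.eq_zero_iff_mem.mpr (h c))
    rw [map_sum, map_sum, map_zero] at h1
    rw [Polynomial.eval_zero, ← h1, Polynomial.eval_finset_sum]
    refine Finset.sum_congr rfl fun k _ => ?_
    rw [Polynomial.eval_monomial]
    have : φ (Ideal.Quotient.mk I (c ^ k • a k)) = c ^ k • φ (Ideal.Quotient.mk I (a k)) := by
      rw [← map_smul]; rfl
    rw [this, smul_eq_mul, mul_comm]
  have := congrArg (fun Q : Polynomial ℂ => Q.coeff k) hP
  simpa [P, Polynomial.finset_sum_coeff, Polynomial.coeff_monomial, hk] using this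

lemma shf_polarize {A : Type} [CommRing A] [Algebra ℂ A] (I J : Ideal A) (N : ℕ)
    (h : ∀ a ∈ J, a ^ N ∈ I) : J ^ N ≤ I := by
  have key : ∀ j ≤ N, ∀ p ∈ J ^ j, ∀ a ∈ J, p * a ^ (N - j) ∈ I := by
    intro j
    induction j with
    | zero =>
      intro _ p _ a ha
      exact I.mul_mem_left _ (h a ha)
    | succ j ih =>
      intro hj p hp a ha
      rw [pow_succ] at hp
      refine Submodule.mul_induction_on hp ?_ ?_
      · intro p hp b hb
        have h1 := shf_vandermonde I (N - j + 1)
          (fun k => p * (a ^ (N - j - k) * b ^ k * ((N - j).choose k : A))) (by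
            intro c
            have h2 := ih (by omega) p hp (c • b + a) (J.add_mem (by
              rw [Algebra.smul_def]; exact J.mul_mem_left _ hb) ha)
            rw [add_pow, Finset.mul_sum] at h2
            convert h2 using 1
            refine Finset.sum_congr rfl fun k _ => ?_
            simp only [Algebra.smul_def, mul_pow, map_pow]
            ring) 1 (by omega)
        have h3 : (algebraMap ℂ A (((N - j : ℕ) : ℂ)⁻¹)) *
            (p * (a ^ (N - j - 1) * b ^ 1 * ((N - j).choose 1 : A))) = p * b * a ^ (N - (j + 1)) := by
          have h4 : algebraMap ℂ A (((N - j : ℕ) : ℂ)⁻¹) * ((N - j : ℕ) : A) = 1 := by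
            rw [← map_natCast (algebraMap ℂ A), ← map_mul, inv_mul_cancel₀, map_one]
            exact_mod_cast (by omega : N - j ≠ 0)
          rw [Nat.choose_one_right, Nat.sub_sub, pow_one]
          linear_combination p * b * a ^ (N - (j + 1)) * h4
        rw [← h3]
        exact I.mul_mem_left _ h1
      · intro p q hp hq
        rw [add_mul]; exact I.add_mem hp hq
  intro p hp
  have := key N le_rfl p hp 0 J.zero_mem
  simpa using this

end

section
open RingTheory.Sequence IsLocalRing

lemma shf_len_le {A : Type} [CommRing A] [IsLocalRing A] [IsNoetherianRing A] [Algebra ℂ A]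
    (n : ℕ) (as : List A) (hm : ∀ a ∈ as, a ∈ maximalIdeal A)
    (hreg : IsWeaklyRegular A as)
    (hfin : n < as.length → Module.Finite ℂ (A ⧸ Ideal.ofList (as.take n))) :
    as.length ≤ n := by
  by_contra hlt
  push Not at hlt
  have := hfin hlt
  have h1 := hreg.regular_mod_prev n hlt
  rw [shf_reg_iff] at h1
  set I := Ideal.ofList (as.take n) with hI
  have hIm : I ≤ maximalIdeal A := by
    rw [hI, Ideal.ofList, Ideal.span_le]
    intro a ha
    exact hm a (List.mem_of_mem_take ha)
  have hinj : Function.Injective (LinearMap.mulLeft ℂ (Ideal.Quotient.mk I as[n])) := by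
    rw [← LinearMap.ker_eq_bot, LinearMap.ker_eq_bot']
    intro b hb
    obtain ⟨b, rfl⟩ := Ideal.Quotient.mk_surjective b
    rw [LinearMap.mulLeft_apply, ← map_mul, Ideal.Quotient.eq_zero_iff_mem] at hb
    exact Ideal.Quotient.eq_zero_iff_mem.mpr (h1 b hb)
  have hsurj := LinearMap.surjective_of_injective hinj
  obtain ⟨b, hb⟩ := hsurj 1
  obtain ⟨b, rfl⟩ := Ideal.Quotient.mk_surjective b
  rw [LinearMap.mulLeft_apply, ← map_mul, ← map_one (Ideal.Quotient.mk I),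
    Ideal.Quotient.eq] at hb
  have h2 := hIm hb
  have h3 : as[n] * b ∈ maximalIdeal A :=
    Ideal.mul_mem_right _ _ (hm _ (List.getElem_mem hlt))
  have h4 : (1 : A) ∈ maximalIdeal A := by
    have := Ideal.sub_mem _ h3 h2
    simpa using this
  exact (Ideal.ne_top_iff_one _).mp (maximalIdeal.isMaximal A).ne_top h4

lemma shf_ofList_ofFn {A : Type} [CommRing A] {m : ℕ} (g : Fin m → A) :
    Ideal.ofList (List.ofFn g) = Ideal.span (Set.range g) := by
  rw [Ideal.ofList]
  congr 1
  ext a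
  simp [List.mem_ofFn]
end

/-- Shiffman's lemma: if the germs of the polynomials `F_1,…,F_m` at `x ∈ ℂ^n` form a
regular sequence in the local ring `O_x` of germs of holomorphic functions, then with
`N = ∏_j deg F_j` one has `(√((F)_x))^N ⊆ (F)_x`. -/
theorem radical_pow_subset_of_regular_sequence (n m : ℕ) (x : Fin n → ℂ)
    (F : Fin m → MvPolynomial (Fin n) ℂ) (hdeg : ∀ j, 0 < (F j).totalDegree)
    (g : Fin m → HoloGermAt n x)
    (hg : ∀ j, (g j : Filter.Germ (nhds x) ℂ) =
      ((fun z => eval z (F j)) : Filter.Germ (nhds x) ℂ))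
    (hreg : RingTheory.Sequence.IsRegular (HoloGermAt n x) (List.ofFn g)) :
    (Ideal.span (Set.range g)).radical ^ (∏ j, (F j).totalDegree) ≤
      Ideal.span (Set.range g) := by
  have hnoeth := shf_noetherian x
  set w : Fin n → HoloGermAt n x :=
    fun i => algebraMap ℂ (HoloGermAt n x) (x i) + shfCo x i with hw
  have hgw : ∀ j, g j = aeval w (F j) := fun j =>
    Subtype.ext ((hg j).trans (shf_aeval x w hw (F j)).symm)
  have hmap : List.ofFn g = (List.ofFn F).map (aeval w) := by
    rw [List.map_ofFn]
    congr 1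
    funext j
    exact hgw j
  have hprod : ((List.ofFn F).map totalDegree).prod = ∏ j, (F j).totalDegree := by
    rw [List.map_ofFn, List.prod_ofFn]
    rfl
  have hwreg := hreg.toIsWeaklyRegular
  have hne : Ideal.ofList (List.ofFn g) ≠ ⊤ := by
    intro h
    apply hreg.top_ne_smul
    rw [h]
    simp
  have hmem : ∀ a ∈ List.ofFn g, a ∈ IsLocalRing.maximalIdeal (HoloGermAt n x) := fun a ha =>
    IsLocalRing.le_maximalIdeal hne (Ideal.subset_span ha)
  have hFd : ∀ f ∈ List.ofFn F, 0 < f.totalDegree := by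
    intro f hf
    obtain ⟨j, rfl⟩ := List.mem_ofFn.mp hf
    exact hdeg j
  have hle : (List.ofFn g).length ≤ n := by
    refine shf_len_le n _ hmem hwreg fun hlt => ?_
    have hw2 : RingTheory.Sequence.IsWeaklyRegular (HoloGermAt n x) ((List.ofFn g).take n) := by
      have := hwreg
      rw [← List.take_append_drop n (List.ofFn g),
        RingTheory.Sequence.isWeaklyRegular_append_iff] at this
      exact this.1
    rw [hmap, ← List.map_take] at hw2 ⊢
    refine (shf_dim (shfCo x) (shf_max x) (shf_res x) x w hw ((List.ofFn F).take n)
      ?_ ?_ hw2).1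
    · simp at hlt ⊢
      omega
    · exact fun f hf => hFd f (List.mem_of_mem_take hf)
  rw [List.length_ofFn] at hle
  refine shf_polarize _ _ _ fun a ha => ?_
  obtain ⟨e, he⟩ := ha
  rw [← shf_ofList_ofFn, hmap] at he ⊢
  rw [← hprod]
  refine shf_main (shfCo x) (shf_max x) (shf_co_weaklyRegular x) (shf_res x) x w hw
    (n - m) (List.ofFn F) ?_ hFd ?_ ?_ a e he
  · simp
    omega
  · intro f hf
    apply hmem
    rw [hmap]
    exact List.mem_map_of_mem hf
  · rw [← hmap]
    exact hwreg
end

section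
/- Let F_1,…,F_m ∈ ℂ[z_1,…,z_n] with deg F_j ≤ d_j and let f_j be the d_j-homogenizations. If the common zero set of f_1,…,f_m in ℙ^n has codimension m and no irreducible component contained in the hyperplane {z_0 = 0}, and Φ lies in the ideal (F_1,…,F_m), then there exist polynomials Q_j with Φ = Σ_j F_j Q_j and deg(F_j Q_j) ≤ deg Φ for each j. -/
open MvPolynomial

/-- The `d`-homogenization of `F ∈ ℂ[z_1,…,z_n]`. -/
noncomputable def homogenize (n d : ℕ) (F : MvPolynomial (Fin n) ℂ) :
    MvPolynomial (Fin (n + 1)) ℂ :=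
  ∑ s ∈ F.support,
    monomial (Finsupp.cons (d - s.sum fun _ e => e) s) (MvPolynomial.coeff s F)

/-- `x` is a nonzerodivisor modulo `I`. -/
def RegMod {S : Type*} [CommRing S] (I : Ideal S) (x : S) : Prop :=
  ∀ a, x * a ∈ I → a ∈ I

/-- `S ⧸ I` has a weakly regular sequence of length `k` inside the ideal `𝔪`. -/
def DepthGe {S : Type*} [CommRing S] (𝔪 : Ideal S) : ℕ → Ideal S → Prop
  | 0, _ => True
  | k + 1, I => ∃ x ∈ 𝔪, RegMod I x ∧ DepthGe 𝔪 k (I ⊔ Ideal.span {x})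

/-- `Q` is a prime of the form `(I : v)`. -/
def AssocPr {S : Type*} [CommRing S] (I Q : Ideal S) : Prop :=
  Q.IsPrime ∧ ∃ v, ∀ a, a ∈ Q ↔ a * v ∈ I

section LocalPart

set_option linter.unusedSectionVars false

variable {S : Type*} [CommRing S]

theorem assocPr_iff [IsNoetherianRing S] (I Q : Ideal S) :
    AssocPr I Q ↔ IsAssociatedPrime Q (S ⧸ I) := by
  rw [isAssociatedPrime_iff]
  refine and_congr_right fun _ => ⟨?_, ?_⟩
  · rintro ⟨v, hv⟩
    refine ⟨Ideal.Quotient.mk I v, ?_⟩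
    ext a
    rw [hv, Submodule.mem_colon_singleton, Submodule.mem_bot, ← Ideal.Quotient.eq_zero_iff_mem,
      Algebra.smul_def, Ideal.Quotient.algebraMap_eq, map_mul]
  · rintro ⟨x, hx⟩
    obtain ⟨v, rfl⟩ := Ideal.Quotient.mk_surjective x
    refine ⟨v, fun a => ?_⟩
    rw [hx, Submodule.mem_colon_singleton, Submodule.mem_bot, ← Ideal.Quotient.eq_zero_iff_mem,
      Algebra.smul_def, Ideal.Quotient.algebraMap_eq, map_mul]

theorem exists_assocPr [IsNoetherianRing S] (I : Ideal S) (u : S) (hu : u ∉ I) :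
    ∃ Q, AssocPr I Q ∧ ∀ a, a * u ∈ I → a ∈ Q := by
  obtain ⟨P, hP, hle⟩ := exists_le_isAssociatedPrime_of_isNoetherianRing S
    (Ideal.Quotient.mk I u) (by rwa [Ne, Ideal.Quotient.eq_zero_iff_mem])
  refine ⟨P, (assocPr_iff _ _).2 hP, fun a ha => hle ?_⟩
  rwa [Submodule.mem_colon_singleton, Submodule.mem_bot,
      Algebra.smul_def, Ideal.Quotient.algebraMap_eq, ← map_mul, Ideal.Quotient.eq_zero_iff_mem]

theorem AssocPr.le {I Q : Ideal S} (h : AssocPr I Q) : I ≤ Q := by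
  obtain ⟨_, v, hv⟩ := h
  exact fun a ha => (hv a).2 (I.mul_mem_right _ ha)

theorem AssocPr.exists {I Q : Ideal S} (h : AssocPr I Q) :
    ∃ v, v ∉ I ∧ ∀ a, a ∈ Q ↔ a * v ∈ I := by
  obtain ⟨h1, v, hv⟩ := h
  refine ⟨v, fun hI => h1.ne_top ?_, hv⟩
  rw [Ideal.eq_top_iff_one, hv, one_mul]
  exact hI

theorem AssocPr.notMem {I Q : Ideal S} (h : AssocPr I Q) {x : S} (hx : RegMod I x) : x ∉ Q := by
  obtain ⟨v, hv, h2⟩ := h.exists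
  exact fun hxQ => hv (hx _ ((h2 x).1 hxQ))

theorem regMod_of [IsNoetherianRing S] {I : Ideal S} {x : S} (h : ∀ Q, AssocPr I Q → x ∉ Q) :
    RegMod I x := by
  intro a ha
  by_contra hcon
  obtain ⟨Q, hQ, hle⟩ := exists_assocPr I a hcon
  exact h Q hQ (hle x ha)

theorem dim_succ_le {p q : Ideal S} [p.IsPrime] (hpq : p < q) :
    ringKrullDim (S ⧸ q) + 1 ≤ ringKrullDim (S ⧸ p) := by
  obtain ⟨x, hxq, hxp⟩ := SetLike.exists_of_lt hpq
  refine ringKrullDim_succ_le_of_surjective (Ideal.Quotient.factor hpq.le)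
    (Ideal.Quotient.factor_surjective hpq.le) (r := Ideal.Quotient.mk p x) ?_ ?_
  · rw [mem_nonZeroDivisors_iff_ne_zero, Ne, Ideal.Quotient.eq_zero_iff_mem]
    exact hxp
  · rw [Ideal.Quotient.factor_mk, Ideal.Quotient.eq_zero_iff_mem]
    exact hxq

variable [IsLocalRing S] [IsNoetherianRing S]

open IsLocalRing

theorem le_dim_of_depthGe (k : ℕ) : ∀ (I Q : Ideal S), DepthGe (maximalIdeal S) k I →
    AssocPr I Q → (k : WithBot ℕ∞) ≤ ringKrullDim (S ⧸ Q) := by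
  induction k with
  | zero =>
    intro I Q _ hQ
    have := hQ.1
    have : Nontrivial (S ⧸ Q) := Ideal.Quotient.nontrivial_iff.2 this.ne_top
    simpa using ringKrullDim_nonneg_of_nontrivial
  | succ k ih =>
    rintro I Q ⟨x, hxm, hx, hD⟩ hQ
    have := hQ.1
    obtain ⟨v, hv, h2⟩ := hQ.exists
    let N : Ideal S := I.colon (Q : Set S)
    have hN : ∀ u, u ∈ N ↔ ∀ q ∈ Q, u * q ∈ I := fun u => Submodule.mem_colon
    have : ∃ u ∈ N, u ∉ I ⊔ Ideal.span {x} := by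
      by_contra! hcon
      have hle : N ≤ I ⊔ maximalIdeal S • N := by
        intro u hu
        obtain ⟨i, hi, y, hy, rfl⟩ := Submodule.mem_sup.1 (hcon u hu)
        obtain ⟨w, rfl⟩ := Ideal.mem_span_singleton'.1 hy
        refine Submodule.mem_sup.2 ⟨i, hi, w * x, ?_, rfl⟩
        rw [mul_comm]
        refine Submodule.smul_mem_smul hxm ((hN w).2 fun q hq => hx _ ?_)
        have h3 := (hN _).1 hu q hq
        have h4 := I.sub_mem h3 (I.mul_mem_right q hi)
        convert h4 using 1
        ring
      have := Submodule.le_of_le_smul_of_le_jacobson_bot (IsNoetherian.noetherian N)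
        (maximalIdeal_le_jacobson _) hle
      exact hv (this ((hN v).2 fun q hq => by rw [mul_comm]; exact (h2 q).1 hq))
    obtain ⟨u, huN, hu⟩ := this
    obtain ⟨Q', hQ', hle⟩ := exists_assocPr _ u hu
    have hlt : Q < Q' := by
      refine lt_of_le_of_ne (fun q hq => hle q ?_) ?_
      · rw [mul_comm]
        exact Ideal.mem_sup_left ((hN u).1 huN q hq)
      · rintro rfl
        exact hQ.notMem hx (hQ'.le (Ideal.mem_sup_right (Ideal.mem_span_singleton_self x)))
    have h5 := ih _ _ hD hQ'
    refine le_trans ?_ (dim_succ_le hlt)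
    push_cast
    gcongr

theorem exists_common_reg (s : Set (Ideal S)) (hs : s.Finite)
    (h : ∀ I ∈ s, ∀ u, (∀ a ∈ maximalIdeal S, a * u ∈ I) → u ∈ I) :
    ∃ z ∈ maximalIdeal S, ∀ I ∈ s, RegMod I z := by
  by_contra! hcon
  let T : Set (Ideal S) := ⋃ I ∈ s, associatedPrimes S (S ⧸ I)
  have hT : T.Finite := hs.biUnion fun I _ => associatedPrimes.finite S (S ⧸ I)
  have hsub : ((maximalIdeal S : Ideal S) : Set S) ⊆ ⋃ i ∈ T, ((id i : Ideal S) : Set S) := by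
    intro z hz
    obtain ⟨I, hI, hr⟩ := hcon z hz
    have : ∃ Q, AssocPr I Q ∧ z ∈ Q := by
      by_contra! h2
      exact hr (regMod_of h2)
    obtain ⟨Q, hQ, hzQ⟩ := this
    exact Set.mem_biUnion (Set.mem_biUnion hI ((assocPr_iff _ _).1 hQ)) hzQ
  obtain ⟨P, hP, hle⟩ := (Ideal.subset_union_prime_finite hT 0 0 (by
    intro i hi _ _
    obtain ⟨I, hI, hi⟩ := Set.mem_iUnion₂.1 hi
    exact hi.1)).1 hsub
  obtain ⟨I, hI, hi⟩ := Set.mem_iUnion₂.1 hP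
  obtain ⟨v, hv, h2⟩ := ((assocPr_iff _ _).2 hi).exists
  exact hv (h I hI v fun a ha => (h2 a).1 (hle ha))

theorem DepthGe.no_socle {k : ℕ} {I : Ideal S} (h : DepthGe (maximalIdeal S) (k + 1) I) :
    ∀ u, (∀ a ∈ maximalIdeal S, a * u ∈ I) → u ∈ I := by
  obtain ⟨x, hx, hr, _⟩ := h
  exact fun u hu => hr u (hu x hx)

theorem mem_sup_span {I : Ideal S} {x a : S} :
    a ∈ I ⊔ Ideal.span {x} ↔ ∃ w, a - x * w ∈ I := by
  constructor
  · intro h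
    obtain ⟨i, hi, y, hy, rfl⟩ := Submodule.mem_sup.1 h
    obtain ⟨w, rfl⟩ := Ideal.mem_span_singleton'.1 hy
    exact ⟨w, by convert hi using 1; ring⟩
  · rintro ⟨w, hw⟩
    exact Submodule.mem_sup.2 ⟨_, hw, x * w, Ideal.mul_mem_right _ _
      (Ideal.mem_span_singleton_self x), by ring⟩

/-- If `x, z` is regular mod `I` and `z` is regular mod `I`, then `x` is regular mod `I + (z)`. -/
theorem RegMod.swap {I : Ideal S} {x z : S} (hx : RegMod I x) (hxz : RegMod (I ⊔ Ideal.span {x}) z) :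
    RegMod (I ⊔ Ideal.span {z}) x := by
  intro a ha
  obtain ⟨w, hw⟩ := mem_sup_span.1 ha
  obtain ⟨b, hb⟩ := mem_sup_span.1 (hxz w (mem_sup_span.2 ⟨a, by
    have := I.neg_mem hw; convert this using 1; ring⟩))
  refine mem_sup_span.2 ⟨b, hx _ ?_⟩
  have := I.add_mem hw (I.mul_mem_left z hb)
  convert this using 1; ring

theorem depth_exchange (k : ℕ) : ∀ (I : Ideal S) (y : S), DepthGe (maximalIdeal S) (k + 1) I →
    y ∈ maximalIdeal S → RegMod I y → DepthGe (maximalIdeal S) k (I ⊔ Ideal.span {y}) := by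
  induction k with
  | zero => intros; trivial
  | succ k ih =>
    intro I y hD hy hry
    have hD0 := hD
    obtain ⟨x, hx, hrx, hDx⟩ := hD
    have hsoc : ∀ u, (∀ a ∈ maximalIdeal S, a * u ∈ I ⊔ Ideal.span {y}) →
        u ∈ I ⊔ Ideal.span {y} := by
      intro u hu
      obtain ⟨v, hv⟩ := mem_sup_span.1 (hu x hx)
      -- `x u = y v` mod `I`
      have : v ∈ I ⊔ Ideal.span {x} := by
        refine hDx.no_socle v fun a ha => ?_
        obtain ⟨w, hw⟩ := mem_sup_span.1 (hu a ha)
        refine mem_sup_span.2 ⟨w, hry _ ?_⟩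
        have := I.sub_mem (I.mul_mem_left x hw) (I.mul_mem_left a hv)
        convert this using 1; ring
      obtain ⟨w, hw⟩ := mem_sup_span.1 this
      refine mem_sup_span.2 ⟨w, hrx _ ?_⟩
      have := I.add_mem hv (I.mul_mem_left y hw)
      convert this using 1; ring
    obtain ⟨z, hz, hreg⟩ := exists_common_reg
      ({I, I ⊔ Ideal.span {x}, I ⊔ Ideal.span {y}} : Set (Ideal S)) (Set.toFinite _) (by
        rintro J (rfl | rfl | rfl)
        · exact hD0.no_socle
        · exact hDx.no_socle
        · exact hsoc)
    have hz1 := hreg I (by simp)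
    have hz2 := hreg (I ⊔ Ideal.span {x}) (by simp)
    have hz3 := hreg (I ⊔ Ideal.span {y}) (by simp)
    have h1 := ih _ z hDx hz hz2
    have h2 : DepthGe (maximalIdeal S) (k + 1) (I ⊔ Ideal.span {z}) :=
      ⟨x, hx, hrx.swap hz2, by rwa [sup_right_comm]⟩
    have h3 := ih _ y h2 hy (hry.swap hz3)
    exact ⟨z, hz, hz3, by rwa [sup_right_comm]⟩

theorem exists_prime_of_le_dim (J : Ideal S) (k : ℕ) (h : (k : WithBot ℕ∞) ≤ ringKrullDim (S ⧸ J)) :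
    ∃ Q : Ideal S, Q.IsPrime ∧ J ≤ Q ∧ (k : WithBot ℕ∞) ≤ ringKrullDim (S ⧸ Q) := by
  rw [ringKrullDim_quotient, Order.le_krullDim_iff] at h
  obtain ⟨l, hl⟩ := h
  refine ⟨l.head.1.asIdeal, l.head.1.2, l.head.2, ?_⟩
  rw [ringKrullDim_quotient, Order.le_krullDim_iff]
  refine ⟨⟨l.length, fun i => ⟨(l i).1, ?_⟩, fun i => l.step i⟩, hl⟩
  have : l.head ≤ l i := LTSeries.head_le _ _
  exact this

open Pointwise in
theorem drop_one (Q : Ideal S) [Q.IsPrime] (x : S) (hx : x ∈ maximalIdeal S) (k : ℕ)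
    (h : ((k + 1 : ℕ) : WithBot ℕ∞) ≤ ringKrullDim (S ⧸ Q)) :
    ∃ Q' : Ideal S, Q'.IsPrime ∧ Q ≤ Q' ∧ x ∈ Q' ∧ (k : WithBot ℕ∞) ≤ ringKrullDim (S ⧸ Q') := by
  have : Nontrivial (S ⧸ Q) := inferInstance
  have : IsLocalRing (S ⧸ Q) :=
    IsLocalRing.of_surjective' (Ideal.Quotient.mk Q) Ideal.Quotient.mk_surjective
  have hx' : Ideal.Quotient.mk Q x ∈ maximalIdeal (S ⧸ Q) := by
    rw [mem_maximalIdeal] at hx ⊢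
    intro hu
    have := IsLocalHom.of_surjective (Ideal.Quotient.mk Q) Ideal.Quotient.mk_surjective
    exact hx (isUnit_of_map_unit (Ideal.Quotient.mk Q) x hu)
  have h1 := ringKrullDim_le_ringKrullDim_quotSMulTop_succ hx'
  have h2 : ringKrullDim ((S ⧸ Q) ⧸ (Ideal.Quotient.mk Q x • (⊤ : Ideal (S ⧸ Q)))) ≤
      ringKrullDim (S ⧸ (Q ⊔ Ideal.span {x})) := by
    let g : S ⧸ (Q ⊔ Ideal.span {x}) →+* (S ⧸ Q) ⧸ (Ideal.Quotient.mk Q x • (⊤ : Ideal (S ⧸ Q))) :=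
      Ideal.Quotient.lift _ ((Ideal.Quotient.mk _).comp (Ideal.Quotient.mk Q)) (by
        intro a ha
        obtain ⟨w, hw⟩ := mem_sup_span.1 ha
        have : Ideal.Quotient.mk Q a = Ideal.Quotient.mk Q x * Ideal.Quotient.mk Q w := by
          rw [← map_mul, Ideal.Quotient.eq]; exact hw
        rw [RingHom.comp_apply, this, Ideal.Quotient.eq_zero_iff_mem]
        exact Submodule.smul_mem_pointwise_smul _ _ _ trivial)
    refine ringKrullDim_le_of_surjective g ?_
    exact Ideal.Quotient.lift_surjective_of_surjective _ _
      (Ideal.Quotient.mk_surjective.comp Ideal.Quotient.mk_surjective)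
  have h3 : ((k + 1 : ℕ) : WithBot ℕ∞) ≤ ringKrullDim (S ⧸ (Q ⊔ Ideal.span {x})) + 1 :=
    h.trans (h1.trans (by gcongr))
  have h4 : (k : WithBot ℕ∞) ≤ ringKrullDim (S ⧸ (Q ⊔ Ideal.span {x})) := by
    rw [Nat.cast_add, Nat.cast_one] at h3
    exact ENat.WithBot.add_le_add_one_right_iff.1 h3
  obtain ⟨Q', hp, hle, hd⟩ := exists_prime_of_le_dim _ _ h4
  exact ⟨Q', hp, le_sup_left.trans hle,
    hle (Ideal.mem_sup_right (Ideal.mem_span_singleton_self x)), hd⟩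

theorem drop_list (L : List S) : ∀ (Q : Ideal S) (_ : Q.IsPrime) (_ : ∀ x ∈ L, x ∈ maximalIdeal S)
    (k : ℕ) (_ : ((k + L.length : ℕ) : WithBot ℕ∞) ≤ ringKrullDim (S ⧸ Q)),
    ∃ Q' : Ideal S, Q'.IsPrime ∧ Q ≤ Q' ∧ Ideal.ofList L ≤ Q' ∧
      (k : WithBot ℕ∞) ≤ ringKrullDim (S ⧸ Q') := by
  induction L with
  | nil => intro Q hQ _ k h; exact ⟨Q, hQ, le_rfl, by simp, by simpa using h⟩
  | cons x L ih =>
    intro Q hQ hL k h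
    obtain ⟨Q1, hp1, hle1, hx1, hd1⟩ := drop_one Q x (hL x (by simp)) (k + L.length)
      (by simpa [add_assoc] using h)
    obtain ⟨Q2, hp2, hle2, hx2, hd2⟩ := ih Q1 hp1 (fun y hy => hL y (by simp [hy])) k hd1
    refine ⟨Q2, hp2, hle1.trans hle2, ?_, hd2⟩
    rw [Ideal.ofList_cons]
    exact sup_le ((Ideal.span_singleton_le_iff_mem _).2 (hle2 hx1)) hx2

theorem depth_of_list (L : List S) (k : ℕ) : ∀ (I : Ideal S) (_ : ∀ x ∈ L, x ∈ maximalIdeal S)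
    (_ : DepthGe (maximalIdeal S) (k + L.length) I)
    (_ : ∀ Q : Ideal S, Q.IsPrime → I ⊔ Ideal.ofList L ≤ Q →
      ringKrullDim (S ⧸ Q) ≤ (k : WithBot ℕ∞)),
    DepthGe (maximalIdeal S) k (I ⊔ Ideal.ofList L) := by
  induction L with
  | nil => intro I _ hD _; simpa using hD
  | cons x L ih =>
    intro I hL hD hdim
    have hreg : RegMod I x := by
      refine regMod_of fun Q hQ hxQ => ?_
      have h1 := le_dim_of_depthGe _ _ _ hD hQ
      obtain ⟨Q', hp, hle, hL', hd⟩ := drop_list L Q hQ.1 (fun y hy => hL y (by simp [hy])) (k + 1)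
        (by rw [List.length_cons] at h1; convert h1 using 2; ring)
      have h2 := hdim Q' hp (by
        rw [Ideal.ofList_cons]
        exact sup_le (hQ.le.trans hle)
          (sup_le ((Ideal.span_singleton_le_iff_mem _).2 (hle hxQ)) hL'))
      have h3 := hd.trans h2
      have : k + 1 ≤ k := by exact_mod_cast h3
      omega
    have h1 := depth_exchange (k + L.length) I x hD (hL x (by simp)) hreg
    have h2 := ih _ (fun y hy => hL y (by simp [hy])) h1 (by
      intro Q hQ hle
      refine hdim Q hQ ?_
      rwa [Ideal.ofList_cons, ← sup_assoc])
    rwa [Ideal.ofList_cons, ← sup_assoc]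

/-- The local statement. -/
theorem local_main (L : List S) (k : ℕ) (z : S)
    (hD : DepthGe (maximalIdeal S) (k + L.length) (⊥ : Ideal S))
    (h1 : ∀ Q : Ideal S, Q.IsPrime → Ideal.ofList L ≤ Q → ringKrullDim (S ⧸ Q) ≤ (k : WithBot ℕ∞))
    (h2 : ∀ Q : Ideal S, Q.IsPrime → Ideal.ofList L ≤ Q → z ∈ Q →
      ringKrullDim (S ⧸ Q) + 1 ≤ (k : WithBot ℕ∞)) :
    RegMod (Ideal.ofList L) z := by
  by_cases hL : ∀ x ∈ L, x ∈ maximalIdeal S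
  · have h3 := depth_of_list L k ⊥ hL hD (by simpa using h1)
    rw [bot_sup_eq] at h3
    refine regMod_of fun Q hQ hz => ?_
    have h4 := le_dim_of_depthGe _ _ _ h3 hQ
    have h5 := h2 Q hQ.1 hQ.le hz
    have h6 : (k : WithBot ℕ∞) + 1 ≤ k := le_trans (by gcongr) h5
    have : k + 1 ≤ k := by exact_mod_cast h6
    omega
  · push Not at hL
    obtain ⟨x, hx, hxm⟩ := hL
    have : Ideal.ofList L = ⊤ :=
      Ideal.eq_top_of_isUnit_mem _ (Ideal.subset_span hx) (by simpa using hxm)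
    intro a _
    rw [this]; trivial

end LocalPart

section PolyPart

open IsLocalRing

/-- The ideal `(X_i - a_i : i < k)`. -/
noncomputable def coordIdeal {N : ℕ} (a : Fin N → ℂ) (k : ℕ) : Ideal (MvPolynomial (Fin N) ℂ) :=
  Ideal.span {p | ∃ i : Fin N, (i : ℕ) < k ∧ p = X i - C (a i)}

/-- Substitute `a_i` for `X_i` when `i < k`. -/
noncomputable def coordSubst {N : ℕ} (a : Fin N → ℂ) (k : ℕ) :
    MvPolynomial (Fin N) ℂ →ₐ[ℂ] MvPolynomial (Fin N) ℂ :=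
  aeval fun i => if (i : ℕ) < k then C (a i) else X i

theorem sub_coordSubst_mem {N : ℕ} (a : Fin N → ℂ) (k : ℕ) (p : MvPolynomial (Fin N) ℂ) :
    p - coordSubst a k p ∈ coordIdeal a k := by
  induction p using MvPolynomial.induction_on with
  | C c => simp [coordSubst]
  | add p q hp hq =>
    have := Ideal.add_mem _ hp hq
    rw [map_add]; convert this using 1; ring
  | mul_X p i hp =>
    have h1 : X i - coordSubst a k (X i) ∈ coordIdeal a k := by
      by_cases hi : (i : ℕ) < k
      · simp only [coordSubst, aeval_X, hi, if_true]
        exact Ideal.subset_span ⟨i, hi, rfl⟩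
      · simp [coordSubst, hi]
    rw [map_mul]
    have := Ideal.add_mem _ (Ideal.mul_mem_right (X i) _ hp)
      (Ideal.mul_mem_left _ (coordSubst a k p) h1)
    convert this using 1; ring

theorem coordIdeal_eq_ker {N : ℕ} (a : Fin N → ℂ) (k : ℕ) :
    coordIdeal a k = RingHom.ker (coordSubst a k) := by
  apply le_antisymm
  · rw [coordIdeal, Ideal.span_le]
    rintro _ ⟨i, hi, rfl⟩
    simp [RingHom.mem_ker, coordSubst, hi, MvPolynomial.algebraMap_eq]
  · intro p hp
    have := sub_coordSubst_mem a k p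
    rwa [(RingHom.mem_ker).1 hp, sub_zero] at this

theorem coordIdeal_isPrime {N : ℕ} (a : Fin N → ℂ) (k : ℕ) : (coordIdeal a k).IsPrime := by
  rw [coordIdeal_eq_ker]; exact RingHom.ker_isPrime _

theorem notMem_coordIdeal {N : ℕ} (a : Fin N → ℂ) (k : ℕ) (hk : k < N) :
    (X ⟨k, hk⟩ - C (a ⟨k, hk⟩) : MvPolynomial (Fin N) ℂ) ∉ coordIdeal a k := by
  rw [coordIdeal_eq_ker, RingHom.mem_ker]
  simp only [coordSubst, map_sub, aeval_X, lt_irrefl, if_false, algHom_C,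
    MvPolynomial.algebraMap_eq]
  intro h
  have := congrArg (eval fun i => a i + 1) h
  simp at this

theorem coordIdeal_succ {N : ℕ} (a : Fin N → ℂ) (k : ℕ) (hk : k < N) :
    coordIdeal a (k + 1) = coordIdeal a k ⊔ Ideal.span {X ⟨k, hk⟩ - C (a ⟨k, hk⟩)} := by
  rw [coordIdeal, coordIdeal, ← Ideal.span_union]
  congr 1
  ext p
  constructor
  · rintro ⟨i, hi, rfl⟩
    rcases Nat.lt_succ_iff_lt_or_eq.1 hi with h | h
    · exact Or.inl ⟨i, h, rfl⟩
    · right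
      have : i = ⟨k, hk⟩ := Fin.ext h
      rw [this]; rfl
  · rintro (⟨i, hi, rfl⟩ | h)
    · exact ⟨i, hi.trans (Nat.lt_succ_self k), rfl⟩
    · exact ⟨⟨k, hk⟩, Nat.lt_succ_self k, h⟩

theorem coord_depth {N : ℕ} (M : Ideal (MvPolynomial (Fin N) ℂ)) [M.IsPrime] (a : Fin N → ℂ)
    (hM : ∀ i, X i - C (a i) ∈ M) :
    DepthGe (maximalIdeal (Localization.AtPrime M)) N ⊥ := by
  set S := Localization.AtPrime M
  have hle : ∀ k, coordIdeal a k ≤ M := by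
    intro k
    rw [coordIdeal, Ideal.span_le]
    rintro _ ⟨i, _, rfl⟩
    exact hM i
  have key : ∀ j, j ≤ N → DepthGe (maximalIdeal S) j
      ((coordIdeal a (N - j)).map (algebraMap _ S)) := by
    intro j
    induction j with
    | zero => intro _; trivial
    | succ j ih =>
      intro hj
      have hk : N - (j + 1) < N := by omega
      have hs : N - j = (N - (j + 1)) + 1 := by omega
      have hp := coordIdeal_isPrime a (N - (j + 1))
      have hdisj : Disjoint (M.primeCompl : Set (MvPolynomial (Fin N) ℂ))
          (coordIdeal a (N - (j + 1))) := by
        rw [Set.disjoint_left]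
        intro x hx hx'
        exact hx (hle _ hx')
      have hp' : ((coordIdeal a (N - (j + 1))).map (algebraMap _ S)).IsPrime :=
        IsLocalization.isPrime_of_isPrime_disjoint M.primeCompl S _ hp hdisj
      refine ⟨algebraMap _ S (X (⟨N - (j + 1), hk⟩ : Fin N) - C (a ⟨N - (j + 1), hk⟩)), ?_, ?_, ?_⟩
      · exact (IsLocalization.AtPrime.to_map_mem_maximal_iff S M _).2 (hM _)
      · intro b hb
        refine (hp'.mem_or_mem hb).resolve_left fun h => notMem_coordIdeal a _ hk ?_
        rw [← IsLocalization.comap_map_of_isPrime_disjoint M.primeCompl S hp hdisj]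
        exact h
      · have := ih (by omega)
        rwa [hs, coordIdeal_succ a _ hk, Ideal.map_sup, Ideal.map_span, Set.image_singleton] at this
  have := key N le_rfl
  have h0 : coordIdeal a (N - N) = ⊥ := by
    simp [coordIdeal]
  rwa [h0, Ideal.map_bot] at this

theorem dim_localization_le {R : Type*} [CommRing R] (M : Ideal R) [M.IsPrime]
    (Q : Ideal (Localization.AtPrime M)) :
    ringKrullDim (Localization.AtPrime M ⧸ Q) ≤
      ringKrullDim (R ⧸ Q.comap (algebraMap R (Localization.AtPrime M))) := by
  rw [ringKrullDim_quotient, ringKrullDim_quotient]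
  let e := IsLocalization.orderEmbedding M.primeCompl (Localization.AtPrime M)
  refine Order.krullDim_le_of_strictMono
    (fun p => ⟨PrimeSpectrum.comap (algebraMap R (Localization.AtPrime M)) p.1,
      Ideal.comap_mono (show Q ≤ p.1.asIdeal from p.2)⟩) ?_
  intro p q hpq
  have : p.1.asIdeal < q.1.asIdeal := hpq
  exact e.lt_iff_lt.2 this

/-- The global statement: `z` is a nonzerodivisor modulo `(f_1,…,f_m)`. -/
theorem global_reg {N m : ℕ} (hm : m ≤ N) (f : Fin m → MvPolynomial (Fin N) ℂ)
    (z : MvPolynomial (Fin N) ℂ)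
    (hcodim : ∀ p ∈ (Ideal.span (Set.range f)).minimalPrimes,
      ringKrullDim (MvPolynomial (Fin N) ℂ ⧸ p) = ((N - m : ℕ) : WithBot ℕ∞))
    (hz : ∀ p ∈ (Ideal.span (Set.range f)).minimalPrimes, z ∉ p) :
    RegMod (Ideal.span (Set.range f)) z := by
  intro b hb
  by_contra hcon
  set I := Ideal.span (Set.range f) with hI
  have hne : I.colon ({b} : Set (MvPolynomial (Fin N) ℂ)) ≠ ⊤ := by
    rw [Ne, Ideal.eq_top_iff_one, Submodule.mem_colon_singleton, one_smul]
    exact hcon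
  obtain ⟨M, hM, hle⟩ := Ideal.exists_le_maximal _ hne
  obtain ⟨a, ha⟩ := isMaximal_iff_eq_vanishingIdeal_singleton.1 hM
  have hMa : ∀ i, X i - C (a i) ∈ M := by
    intro i
    rw [ha, mem_vanishingIdeal_singleton_iff]
    simp
  have := hM.isPrime
  let S := Localization.AtPrime M
  have hD := coord_depth M a hMa
  let L : List S := List.ofFn fun j => algebraMap _ S (f j)
  have hLen : L.length = m := by simp [L]
  have hLI : Ideal.ofList L = I.map (algebraMap _ S) := by
    rw [hI, Ideal.map_span, Ideal.ofList]
    congr 1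
    ext x
    simp [L, List.mem_ofFn]
  have hcomap : ∀ Q : Ideal S, Ideal.ofList L ≤ Q →
      I ≤ Q.comap (algebraMap (MvPolynomial (Fin N) ℂ) S) := by
    intro Q h
    rw [hLI] at h
    exact Ideal.map_le_iff_le_comap.1 h
  have hreg := local_main L (N - m) (algebraMap _ S z)
    (by rw [hLen, Nat.sub_add_cancel hm]; exact hD)
    (by
      intro Q hQ hLQ
      have hq := hcomap Q hLQ
      obtain ⟨p, hp, hpq⟩ := Ideal.exists_minimalPrimes_le hq
      refine (dim_localization_le M Q).trans ?_
      rw [← hcodim p hp]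
      exact ringKrullDim_le_of_surjective (Ideal.Quotient.factor hpq)
        (Ideal.Quotient.factor_surjective hpq))
    (by
      intro Q hQ hLQ hzQ
      have hq := hcomap Q hLQ
      obtain ⟨p, hp, hpq⟩ := Ideal.exists_minimalPrimes_le hq
      have hpp := hp.1.1
      rw [← hcodim p hp]
      refine le_trans ?_ (dim_succ_le (lt_of_le_of_ne hpq ?_))
      · gcongr
        exact dim_localization_le M Q
      · rintro rfl
        exact hz _ hp hzQ)
  have h1 : algebraMap _ S b ∈ I.map (algebraMap _ S) := by
    rw [← hLI]
    refine hreg _ ?_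
    rw [hLI, ← map_mul]
    exact Ideal.mem_map_of_mem _ hb
  obtain ⟨s, hs, hsb⟩ := (IsLocalization.algebraMap_mem_map_algebraMap_iff M.primeCompl S I b).1 h1
  exact hs (hle (by rw [Submodule.mem_colon_singleton]; exact hsb))

end PolyPart

section Homogenization

theorem homogenize_eq_sum (n d : ℕ) (F : MvPolynomial (Fin n) ℂ) (T : Finset (Fin n →₀ ℕ))
    (hT : F.support ⊆ T) : homogenize n d F =
      ∑ s ∈ T, monomial (Finsupp.cons (d - s.sum fun _ e => e) s) (MvPolynomial.coeff s F) := by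
  rw [homogenize]
  refine Finset.sum_subset hT fun s _ hs => ?_
  rw [notMem_support_iff.1 hs, monomial_zero]

theorem homogenize_add (n d : ℕ) (F G : MvPolynomial (Fin n) ℂ) :
    homogenize n d (F + G) = homogenize n d F + homogenize n d G := by
  classical
  rw [homogenize_eq_sum n d (F + G) (F.support ∪ G.support) support_add,
    homogenize_eq_sum n d F (F.support ∪ G.support) Finset.subset_union_left,
    homogenize_eq_sum n d G (F.support ∪ G.support) Finset.subset_union_right,
    ← Finset.sum_add_distrib]
  exact Finset.sum_congr rfl fun s _ => by rw [coeff_add, map_add]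

theorem homogenize_zero (n d : ℕ) : homogenize n d 0 = 0 := by simp [homogenize]

theorem homogenize_monomial (n d : ℕ) (s : Fin n →₀ ℕ) (c : ℂ) :
    homogenize n d (monomial s c) = monomial (Finsupp.cons (d - s.sum fun _ e => e) s) c := by
  classical
  rw [homogenize_eq_sum n d _ {s} support_monomial_subset]
  simp

theorem homogenize_sum {ι : Type*} (n d : ℕ) (T : Finset ι) (F : ι → MvPolynomial (Fin n) ℂ) :
    homogenize n d (∑ i ∈ T, F i) = ∑ i ∈ T, homogenize n d (F i) := by
  classical
  induction T using Finset.induction_on with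
  | empty => simp [homogenize_zero]
  | insert a T ha ih => rw [Finset.sum_insert ha, Finset.sum_insert ha, homogenize_add, ih]

theorem degree_cons {n : ℕ} (e : ℕ) (s : Fin n →₀ ℕ) :
    (Finsupp.cons e s).degree = e + s.sum fun _ e => e := by
  rw [Finsupp.degree_eq_sum, Fin.sum_univ_succ, Finsupp.sum_fintype _ _ (fun _ => rfl)]
  simp

theorem homogenize_isHomogeneous (n d : ℕ) (F : MvPolynomial (Fin n) ℂ) (hF : F.totalDegree ≤ d) :
    (homogenize n d F).IsHomogeneous d := by
  refine IsHomogeneous.sum _ _ _ fun s hs => isHomogeneous_monomial _ ?_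
  have := (le_totalDegree hs).trans hF
  rw [degree_cons]
  omega

/-- Dehomogenization: `z_0 = 1`. -/
noncomputable def dehom (n : ℕ) : MvPolynomial (Fin (n + 1)) ℂ →ₐ[ℂ] MvPolynomial (Fin n) ℂ :=
  aeval (Fin.cons 1 X : Fin (n + 1) → MvPolynomial (Fin n) ℂ)

theorem dehom_monomial (n e : ℕ) (s : Fin n →₀ ℕ) (c : ℂ) :
    dehom n (monomial (Finsupp.cons e s) c) = monomial s c := by
  rw [dehom, aeval_monomial, Finsupp.prod_fintype _ _ (fun _ => pow_zero _), Fin.prod_univ_succ,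
    monomial_eq, Finsupp.prod_fintype _ _ (fun _ => pow_zero _)]
  simp [MvPolynomial.algebraMap_eq]

theorem dehom_homogenize (n d : ℕ) (F : MvPolynomial (Fin n) ℂ) :
    dehom n (homogenize n d F) = F := by
  rw [homogenize, map_sum]
  conv_rhs => rw [F.as_sum]
  exact Finset.sum_congr rfl fun s _ => dehom_monomial _ _ _ _

theorem homogenize_dehom (n d : ℕ) (p : MvPolynomial (Fin (n + 1)) ℂ) (hp : p.IsHomogeneous d) :
    homogenize n d (dehom n p) = p := by
  conv_lhs => rw [p.as_sum]
  conv_rhs => rw [p.as_sum]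
  rw [map_sum, homogenize_sum]
  refine Finset.sum_congr rfl fun t ht => ?_
  have h1 : t.degree = d := by
    by_contra h
    exact (mem_support_iff.1 ht) (hp.coeff_eq_zero h)
  have h2 : t = Finsupp.cons (t 0) t.tail := (Finsupp.cons_tail t).symm
  generalize coeff t p = c
  rw [h2, degree_cons] at h1
  rw [h2, dehom_monomial, homogenize_monomial]
  rw [show d - (t.tail.sum fun _ e => e) = t 0 by omega]

theorem dehom_totalDegree_le (n : ℕ) (p : MvPolynomial (Fin (n + 1)) ℂ) :
    (dehom n p).totalDegree ≤ p.totalDegree := by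
  rw [p.as_sum, map_sum]
  refine (totalDegree_finsetSum _ _).trans (Finset.sup_le fun t ht => ?_)
  rw [← p.as_sum]
  refine le_trans ?_ (le_totalDegree ht)
  rw [show t = Finsupp.cons (t 0) t.tail from (Finsupp.cons_tail t).symm, dehom_monomial]
  refine (totalDegree_monomial_le _ _).trans ?_
  have := degree_cons (t 0) t.tail
  rw [Finsupp.degree_apply] at this
  change _ ≤ (Finsupp.cons (t 0) t.tail).sum fun _ e => e
  have h3 : ((Finsupp.cons (t 0) t.tail).sum fun _ e => e) = 
    t 0 + t.tail.sum fun _ e => e := this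
  rw [h3]
  exact Nat.le_add_left _ _

/-- The degree-`D` component of a product with a homogeneous polynomial. -/
theorem homogeneousComponent_mul_of_homog {σ : Type*} {f : MvPolynomial σ ℂ} {d : ℕ}
    (hf : f.IsHomogeneous d) (q : MvPolynomial σ ℂ) (D : ℕ) :
    homogeneousComponent D (f * q) =
      f * (if d ≤ D then homogeneousComponent (D - d) q else 0) := by
  conv_lhs => rw [← sum_homogeneousComponent q, Finset.mul_sum, map_sum]
  have h1 : ∀ i, homogeneousComponent D (f * homogeneousComponent i q) =
      if D = d + i then f * homogeneousComponent i q else 0 := fun i =>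
    by
      rw [homogeneousComponent_of_mem (hf.mul (homogeneousComponent_isHomogeneous i q))]
  simp_rw [h1]
  split_ifs with h
  · rw [Finset.sum_eq_single (D - d)]
    · rw [if_pos (by omega)]
    · intro b _ hb
      rw [if_neg (by omega)]
    · intro hb
      rw [Finset.mem_range, not_lt] at hb
      rw [homogeneousComponent_eq_zero _ _ (by omega)]
      simp
  · rw [mul_zero]
    refine Finset.sum_eq_zero fun i _ => if_neg (by omega)

end Homogenization

/-- `z_0` is a nonzerodivisor modulo `(f_1,…,f_m)`, also in the degenerate case `m > n + 1`. -/
theorem regMod_zero (n m : ℕ) (f : Fin m → MvPolynomial (Fin (n + 1)) ℂ)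
    (d : Fin m → ℕ) (hf : ∀ j, (f j).IsHomogeneous (d j))
    (hcodim : ∀ p ∈ (Ideal.span (Set.range f)).minimalPrimes,
      ringKrullDim (MvPolynomial (Fin (n + 1)) ℂ ⧸ p) = ((n + 1 - m : ℕ) : WithBot ℕ∞))
    (hinfty : ∀ p ∈ (Ideal.span (Set.range f)).minimalPrimes,
      (X 0 : MvPolynomial (Fin (n + 1)) ℂ) ∉ p) :
    RegMod (Ideal.span (Set.range f)) (X 0) := by
  rcases le_or_gt m (n + 1) with hm | hm
  · exact global_reg hm f (X 0) hcodim hinfty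
  · by_cases hc : ∀ j, constantCoeff (f j) = 0
    · exfalso
      let J : Ideal (MvPolynomial (Fin (n + 1)) ℂ) :=
        RingHom.ker (constantCoeff : MvPolynomial (Fin (n + 1)) ℂ →+* ℂ)
      have hJ : J.IsPrime := RingHom.ker_isPrime _
      have hIJ : Ideal.span (Set.range f) ≤ J := by
        rw [Ideal.span_le]
        rintro _ ⟨j, rfl⟩
        exact hc j
      obtain ⟨p, hp, hpJ⟩ := Ideal.exists_minimalPrimes_le hIJ
      have hpp := hp.1.1
      have h0 := hcodim p hp
      rw [Nat.sub_eq_zero_of_le hm.le] at h0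
      have hpJ' : p = J := by
        by_contra hne
        have h1 := dim_succ_le (lt_of_le_of_ne hpJ hne)
        rw [h0] at h1
        have : Nontrivial (MvPolynomial (Fin (n + 1)) ℂ ⧸ J) :=
          Ideal.Quotient.nontrivial_iff.2 hJ.ne_top
        have h2 : (0 : WithBot ℕ∞) ≤ ringKrullDim (MvPolynomial (Fin (n + 1)) ℂ ⧸ J) :=
          ringKrullDim_nonneg_of_nontrivial
        have h3 : (0 : WithBot ℕ∞) + 1 ≤ ((0 : ℕ) : WithBot ℕ∞) := le_trans (by gcongr) h1
        have : 0 + 1 ≤ 0 := by exact_mod_cast h3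
        omega
      refine hinfty p hp ?_
      rw [hpJ', RingHom.mem_ker]
      simp
    · push Not at hc
      obtain ⟨j, hj⟩ := hc
      have hd : d j = 0 := by
        by_contra h
        refine hj ?_
        rw [constantCoeff_eq]
        exact (hf j).coeff_eq_zero (by simpa using Ne.symm h)
      have h1 := hf j
      rw [hd, ← totalDegree_zero_iff_isHomogeneous] at h1
      rw [totalDegree_eq_zero_iff_eq_C] at h1
      have htop : Ideal.span (Set.range f) = ⊤ := by
        refine Ideal.eq_top_of_isUnit_mem _ (Ideal.subset_span ⟨j, rfl⟩) ?_
        rw [h1]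
        exact (IsUnit.mk0 _ hj).map C
      intro a _
      rw [htop]; trivial

/-- Generalization of Max Nöther's theorem (Theorem 2 of the paper): if the projective
zero set of the homogenizations `f_j` of `F_1,…,F_m` has codimension `m` (every
irreducible component of its cone in `ℂ^{n+1}` has dimension `n+1−m`) and no irreducible
component is contained in the hyperplane at infinity `{z_0 = 0}` (no minimal prime of the
ideal `(f_1,…,f_m)` contains `z_0`), then every `Φ ∈ (F_1,…,F_m)` can be written
`Φ = Σ_j F_j Q_j` with `deg (F_j Q_j) ≤ deg Φ`. -/
theorem generalized_max_noether (n m : ℕ) (F : Fin m → MvPolynomial (Fin n) ℂ)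
    (d : Fin m → ℕ) (hdeg : ∀ j, (F j).totalDegree ≤ d j)
    (Φ : MvPolynomial (Fin n) ℂ)
    (hcodim : ∀ p ∈ (Ideal.span
        (Set.range fun j => homogenize n (d j) (F j))).minimalPrimes,
      ringKrullDim (MvPolynomial (Fin (n + 1)) ℂ ⧸ p) = ((n + 1 - m : ℕ) : WithBot (WithTop ℕ)))
    (hinfty : ∀ p ∈ (Ideal.span
        (Set.range fun j => homogenize n (d j) (F j))).minimalPrimes,
      (X 0 : MvPolynomial (Fin (n + 1)) ℂ) ∉ p)
    (hΦ : Φ ∈ Ideal.span (Set.range F)) :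
    ∃ Q : Fin m → MvPolynomial (Fin n) ℂ,
      Φ = ∑ j, F j * Q j ∧ ∀ j, (F j * Q j).totalDegree ≤ Φ.totalDegree := by
  classical
  set f : Fin m → MvPolynomial (Fin (n + 1)) ℂ := fun j => homogenize n (d j) (F j) with hf_def
  have hf : ∀ j, (f j).IsHomogeneous (d j) := fun j => homogenize_isHomogeneous n _ _ (hdeg j)
  have hψf : ∀ j, dehom n (f j) = F j := fun j => dehom_homogenize _ _ _
  have hreg := regMod_zero n m f d hf hcodim hinfty
  set D := Φ.totalDegree with hDdef
  have hφ : (homogenize n D Φ).IsHomogeneous D := homogenize_isHomogeneous n D Φ le_rfl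
  obtain ⟨G, hG⟩ := (Ideal.mem_span_range_iff_exists_fun).1 hΦ
  let K : ℕ := ∑ j, (d j + (G j).totalDegree)
  have hK : ∀ j, d j + (G j).totalDegree ≤ K := fun j =>
    Finset.single_le_sum (f := fun j => d j + (G j).totalDegree) (fun _ _ => Nat.zero_le _)
      (Finset.mem_univ j)
  have key : X 0 ^ K * homogenize n D Φ = ∑ j, homogenize n (K + D - d j) (G j) * f j := by
    have h1 : (X 0 ^ K * homogenize n D Φ).IsHomogeneous (K + D) :=
      (isHomogeneous_X_pow 0 K).mul hφ
    have h2 : (∑ j, homogenize n (K + D - d j) (G j) * f j).IsHomogeneous (K + D) := by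
      refine IsHomogeneous.sum _ _ _ fun j _ => ?_
      have h3 := hK j
      have h4 := (homogenize_isHomogeneous n (K + D - d j) (G j) (by omega)).mul (hf j)
      rwa [Nat.sub_add_cancel (by omega)] at h4
    rw [← homogenize_dehom n _ _ h1, ← homogenize_dehom n _ _ h2]
    congr 1
    rw [map_mul, map_pow, dehom_homogenize, map_sum]
    simp only [map_mul, dehom_homogenize, hψf]
    rw [hG]
    simp [dehom]
  have hmem : ∀ k : ℕ, X 0 ^ k * homogenize n D Φ ∈ Ideal.span (Set.range f) →
      homogenize n D Φ ∈ Ideal.span (Set.range f) := by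
    intro k
    induction k with
    | zero => simp
    | succ k ih =>
      intro h
      refine ih (hreg _ ?_)
      rwa [← mul_assoc, ← pow_succ']
  have hin := hmem K (by
    rw [key]
    exact Ideal.sum_mem _ fun j _ => Ideal.mul_mem_left _ _ (Ideal.subset_span ⟨j, rfl⟩))
  obtain ⟨q, hq⟩ := (Ideal.mem_span_range_iff_exists_fun).1 hin
  let r : Fin m → MvPolynomial (Fin (n + 1)) ℂ := fun j =>
    if d j ≤ D then homogeneousComponent (D - d j) (q j) else 0
  have hr : homogenize n D Φ = ∑ j, f j * r j := by
    rw [← homogeneousComponent_eq_self hφ, ← hq, map_sum]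
    refine Finset.sum_congr rfl fun j _ => ?_
    rw [mul_comm, homogeneousComponent_mul_of_homog (hf j)]
  refine ⟨fun j => dehom n (r j), ?_, fun j => ?_⟩
  · have := congrArg (dehom n) hr
    rw [dehom_homogenize, map_sum] at this
    rw [this]
    exact Finset.sum_congr rfl fun j _ => by rw [map_mul, hψf]
  · by_cases h : d j ≤ D
    · have h1 : (r j).totalDegree ≤ D - d j := by
        simp only [r, if_pos h]
        exact (homogeneousComponent_isHomogeneous _ _).totalDegree_le
      have h2 := dehom_totalDegree_le n (r j)
      have h3 := totalDegree_mul (F j) (dehom n (r j))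
      have h4 := hdeg j
      change (F j * dehom n (r j)).totalDegree ≤ D
      omega
    · simp [r, if_neg h]
end

section
/- Let F_1,…,F_n ∈ ℂ[z_1,…,z_n] be polynomials whose common projective zero set (of their homogenizations) is finite and contained in the affine chart ℂ^n ⊂ ℙ^n (no common zeros at infinity), and let Φ be a polynomial in the ideal (F_1,…,F_n). Then there exist polynomials Q_1,…,Q_n with Φ = Σ_j F_j Q_j and deg(F_j Q_j) ≤ deg Φ for each j. -/
open MvPolynomial

section
variable {R : Type*} [CommRing R] {n : ℕ}

/-- The linear functional on `R^n` given by `f`. -/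
noncomputable def ksDual (f : Fin n → R) : Module.Dual R (Fin n → R) :=
  Fintype.linearCombination R f

theorem ksDual_apply (f v : Fin n → R) : ksDual f v = ∑ j, v j * f j := by
  simp [ksDual, Fintype.linearCombination_apply]

/-- The Koszul differential on the exterior algebra. -/
noncomputable def ksD (f : Fin n → R) :
    ExteriorAlgebra R (Fin n → R) →ₗ[R] ExteriorAlgebra R (Fin n → R) :=
  CliffordAlgebra.contractLeft (ksDual f)

theorem ksD_mul (f v : Fin n → R) (x : ExteriorAlgebra R (Fin n → R)) :
    ksD f (ExteriorAlgebra.ι R v * x) = ksDual f v • x - ExteriorAlgebra.ι R v * ksD f x :=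
  CliffordAlgebra.contractLeft_ι_mul _ _ _

theorem ksD_ksD (f : Fin n → R) (x : ExteriorAlgebra R (Fin n → R)) : ksD f (ksD f x) = 0 :=
  CliffordAlgebra.contractLeft_contractLeft _ _

theorem ksD_algebraMap (f : Fin n → R) (r : R) : ksD f (algebraMap R _ r) = 0 :=
  CliffordAlgebra.contractLeft_algebraMap _ _ _

theorem ksD_ι (f v : Fin n → R) :
    ksD f (ExteriorAlgebra.ι R v) = algebraMap R _ (ksDual f v) :=
  CliffordAlgebra.contractLeft_ι _ _ _

theorem ext_induction {P : ExteriorAlgebra R (Fin n → R) → Prop}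
    (h0 : ∀ r, P (algebraMap R _ r)) (h1 : ∀ x y, P x → P y → P (x + y))
    (h2 : ∀ v x, P x → P (ExteriorAlgebra.ι R v * x)) (x) : P x :=
  CliffordAlgebra.left_induction (Q := (0 : QuadraticForm R (Fin n → R))) (P := P)
    h0 h1 (fun x v hx => h2 v x hx) x

theorem fst_ksD (f : Fin n → R) (x : ExteriorAlgebra R (Fin n → R)) :
    (ExteriorAlgebra.toTrivSqZeroExt (ksD f x)).fst
      = ksDual f (ExteriorAlgebra.toTrivSqZeroExt x).snd := by
  induction x using ext_induction with
  | h0 r => simp [ksD_algebraMap, AlgHom.commutes, TrivSqZeroExt.algebraMap_eq_inl]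
  | h1 x y hx hy => simp [hx, hy]
  | h2 v x hx => simp [ksD_mul, mul_comm]

theorem snd_ksD (f : Fin n → R) (x : ExteriorAlgebra R (Fin n → R)) :
    ∃ b : Fin n → Fin n → R, (∀ j k, b j k = - b k j) ∧
      ∀ j, (ExteriorAlgebra.toTrivSqZeroExt (ksD f x)).snd j = ∑ k, b j k * f k := by
  induction x using ext_induction with
  | h0 r => exact ⟨0, by simp, by simp [ksD_algebraMap]⟩
  | h1 x y hx hy =>
    obtain ⟨b, hb, hb'⟩ := hx
    obtain ⟨c, hc, hc'⟩ := hy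
    refine ⟨b + c, fun j k => ?_, fun j => ?_⟩
    · simp only [Pi.add_apply]; rw [hb, hc]; ring
    · simp [hb', hc', add_mul, Finset.sum_add_distrib]
  | h2 v x hx =>
    set w := (ExteriorAlgebra.toTrivSqZeroExt x).snd with hw
    refine ⟨fun j k => v k * w j - w k * v j, fun j k => by ring, fun j => ?_⟩
    have := fst_ksD f x
    simp [ksD_mul, this, ← hw, ksDual_apply, sub_mul, Finset.sum_sub_distrib, Finset.sum_mul]
    rw [Finset.mul_sum]
    congr 1 <;> exact Finset.sum_congr rfl fun _ _ => by ring

theorem mem_smul_top_iff (J : Ideal R) (x : ExteriorAlgebra R (Fin n → R)) :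
    x ∈ J • (⊤ : Submodule R (ExteriorAlgebra R (Fin n → R))) ↔
      ∀ s, (Pi.basisFun R (Fin n)).ExteriorAlgebra.repr x s ∈ J := by
  set B := (Pi.basisFun R (Fin n)).ExteriorAlgebra
  constructor
  · intro hx s
    have := Submodule.mem_map_of_mem (f := B.coord s) hx
    rw [Submodule.map_smul''] at this
    exact (Submodule.smul_le.2 fun r hr m _ => J.mul_mem_right m hr) this
  · intro h
    rw [← B.sum_repr x]
    exact Submodule.sum_mem _ fun s _ => Submodule.smul_mem_smul (h s) trivial

theorem pow_eq_zero_of_lt (i : ℕ) (h : n < i) (x : ExteriorAlgebra R (Fin n → R))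
    (hx : x ∈ ⋀[R]^i (Fin n → R)) : x = 0 := by
  have he : IsEmpty (Set.powersetCard (Fin n) i) := by
    refine ⟨fun s => ?_⟩
    have h1 := Finset.card_le_univ s.val
    have h2 : s.val.card = i := s.2
    simp at h1
    omega
  have := ((Pi.basisFun R (Fin n)).exteriorPower i).repr.injective.subsingleton
  exact congrArg Subtype.val (Subsingleton.elim (⟨x, hx⟩ : ⋀[R]^i (Fin n → R)) 0)

theorem koszul_step (f x : Fin n → R) (hx : ∀ i, x i ∈ Ideal.span (Set.range f))
    (J : ℕ → Ideal R) (hJ : ∀ i : Fin n, J (i + 1) = J i ⊔ Ideal.span {x i})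
    (hreg : ∀ (i : Fin n) p, x i * p ∈ J i → p ∈ J i)
    (k : ℕ) (hk : k ≤ n) : ∀ i, k < i → ∀ w ∈ ⋀[R]^i (Fin n → R),
      ksD f w ∈ J k • (⊤ : Submodule R (ExteriorAlgebra R (Fin n → R))) →
      ∃ y, w - ksD f y ∈ J k • (⊤ : Submodule R (ExteriorAlgebra R (Fin n → R))) := by
  induction hk using Nat.decreasingInduction with
  | self =>
    intro i hi w hw _
    rw [pow_eq_zero_of_lt i hi w hw]
    exact ⟨0, by simp⟩
  | of_succ k hk ih =>
    intro i hi w hw hdw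
    have hks := hJ ⟨k, hk⟩
    set X := x ⟨k, hk⟩ with hX
    obtain ⟨c, hc⟩ := (Ideal.mem_span_range_iff_exists_fun).1 (hx ⟨k, hk⟩)
    have hc' : ksDual f c = X := by rw [ksDual_apply, hc]
    have hle : J k ≤ J (k + 1) := by rw [hks]; exact le_sup_left
    have hXm : X ∈ J (k + 1) := by
      rw [hks]; exact Ideal.mem_sup_right (Ideal.mem_span_singleton_self _)
    have hmul : ∀ (I : Ideal R) (z : ExteriorAlgebra R (Fin n → R)), z ∈ I • (⊤ : Submodule R _) →
        ExteriorAlgebra.ι R c * z ∈ I • (⊤ : Submodule R (ExteriorAlgebra R (Fin n → R))) := by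
      intro I z hz
      have := Submodule.mem_map_of_mem (f := LinearMap.mulLeft R (ExteriorAlgebra.ι R c)) hz
      rw [Submodule.map_smul''] at this
      exact Submodule.smul_mono le_rfl le_top this
    have hD : ∀ (I : Ideal R) (z : ExteriorAlgebra R (Fin n → R)), z ∈ I • (⊤ : Submodule R _) →
        ksD f z ∈ I • (⊤ : Submodule R (ExteriorAlgebra R (Fin n → R))) := by
      intro I z hz
      have := Submodule.mem_map_of_mem (f := ksD f) hz
      rw [Submodule.map_smul''] at this
      exact Submodule.smul_mono le_rfl le_top this
    obtain ⟨y, hy⟩ := ih (i + 1) (by omega) (ExteriorAlgebra.ι R c * w) (by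
        rw [show (⋀[R]^(i+1) (Fin n → R)) = _ * _ from pow_succ' _ _]
        exact Submodule.mul_mem_mul (LinearMap.mem_range_self _ _) hw) (by
        rw [ksD_mul, hc']
        refine Submodule.sub_mem _ (Submodule.smul_mem_smul hXm trivial) ?_
        exact hmul _ _ (Submodule.smul_mono hle le_rfl hdw))
    rw [hks, Submodule.sup_smul, Submodule.mem_sup] at hy
    obtain ⟨j, hj, z, hz, hyz⟩ := hy
    rw [Submodule.ideal_span_singleton_smul, Submodule.mem_smul_pointwise_iff_exists] at hz
    obtain ⟨t, -, rfl⟩ := hz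
    refine ⟨t, ?_⟩
    have key : X • (w - ksD f t) ∈
        J k • (⊤ : Submodule R (ExteriorAlgebra R (Fin n → R))) := by
      have h1 := congrArg (ksD f) hyz
      rw [map_sub, ksD_ksD, ksD_mul, hc', map_add, map_smul] at h1
      have h2 : X • (w - ksD f t) = ksD f j + ExteriorAlgebra.ι R c * ksD f w := by
        have h3 : X • w = ksD f j + X • ksD f t + ExteriorAlgebra.ι R c * ksD f w := by
          rw [h1]; abel
        rw [smul_sub, h3]; abel
      rw [h2]
      exact Submodule.add_mem _ (hD _ _ hj) (hmul _ _ hdw)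
    rw [mem_smul_top_iff] at key ⊢
    intro s
    have := key s
    rw [map_smul] at this
    exact hreg ⟨k, hk⟩ _ this

theorem koszul_syzygy (f x : Fin n → R) (hx : ∀ i, x i ∈ Ideal.span (Set.range f))
    (J : ℕ → Ideal R) (hJ0 : J 0 = ⊥) (hJ : ∀ i : Fin n, J (i + 1) = J i ⊔ Ideal.span {x i})
    (hreg : ∀ (i : Fin n) p, x i * p ∈ J i → p ∈ J i)
    (a : Fin n → R) (ha : ∑ j, a j * f j = 0) :
    ∃ b : Fin n → Fin n → R, (∀ j k, b j k = - b k j) ∧ ∀ j, a j = ∑ k, b j k * f k := by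
  obtain ⟨y, hy⟩ := koszul_step f x hx J hJ hreg 0 (Nat.zero_le _) 1 one_pos
    (ExteriorAlgebra.ι R a) (by
      rw [show (⋀[R]^1 (Fin n → R)) = _ from pow_one _]; exact LinearMap.mem_range_self _ _)
    (by rw [ksD_ι, ksDual_apply, ha, map_zero]; exact zero_mem _)
  rw [hJ0, Submodule.bot_smul, Submodule.mem_bot, sub_eq_zero] at hy
  obtain ⟨b, hb, hb'⟩ := snd_ksD f y
  refine ⟨b, hb, fun j => ?_⟩
  rw [← hb', ← hy]
  simp
end

theorem eval_homogenize_zero {n : ℕ} (F : MvPolynomial (Fin n) ℂ) (w : Fin n → ℂ) :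
    eval (Fin.cons 0 w : Fin (n + 1) → ℂ) (homogenize n F.totalDegree F) =
      eval w (homogeneousComponent F.totalDegree F) := by
  rw [homogenize, homogeneousComponent_apply, map_sum, map_sum, Finset.sum_filter]
  refine Finset.sum_congr rfl fun s hs => ?_
  have hle : s.degree ≤ F.totalDegree := by
    have := le_totalDegree hs
    simpa [Finsupp.degree_apply, Finsupp.sum] using this
  have hsum : (s.sum fun _ e => e) = s.degree := rfl
  rw [hsum, eval_monomial, Finsupp.prod_fintype _ _ (by simp), Fin.prod_univ_succ]
  simp only [Finsupp.cons_zero, Finsupp.cons_succ, Fin.cons_zero, Fin.cons_succ]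
  split_ifs with h
  · rw [h, eval_monomial, Finsupp.prod_fintype _ _ (by simp)]
    simp
  · rw [zero_pow (by omega)]
    simp

theorem exists_pow_mem {n : ℕ} (f : Fin n → MvPolynomial (Fin n) ℂ)
    (h : ∀ w : Fin n → ℂ, (∀ j, eval w (f j) = 0) → w = 0) (i : Fin n) :
    ∃ N, (X i : MvPolynomial (Fin n) ℂ) ^ N ∈ Ideal.span (Set.range f) := by
  have : (X i : MvPolynomial (Fin n) ℂ) ∈ (Ideal.span (Set.range f)).radical := by
    rw [← vanishingIdeal_zeroLocus_eq_radical (K := ℂ), mem_vanishingIdeal_iff]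
    intro w hw
    rw [mem_zeroLocus_iff] at hw
    have := h w fun j => by
      simpa [aeval_eq_eval] using hw (f j) (Ideal.subset_span ⟨j, rfl⟩)
    simp [this]
  exact this

/-- The ideal generated by the first `k` of the powers `X i ^ N i`. -/
noncomputable def powIdeal {n : ℕ} (N : Fin n → ℕ) (k : ℕ) : Ideal (MvPolynomial (Fin n) ℂ) :=
  Ideal.span ((fun s => monomial s (1 : ℂ)) '' {s | ∃ i : Fin n, i.val < k ∧ s = Finsupp.single i (N i)})

theorem powIdeal_succ {n : ℕ} (N : Fin n → ℕ) (i : Fin n) :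
    powIdeal N (i + 1) = powIdeal N i ⊔ Ideal.span {X i ^ N i} := by
  rw [powIdeal, powIdeal, ← Ideal.span_union]
  congr 1
  ext p
  simp only [Set.mem_image, Set.mem_ofPred_eq, Set.mem_union, Set.mem_singleton_iff]
  constructor
  · rintro ⟨s, ⟨j, hj, rfl⟩, rfl⟩
    rcases Nat.lt_succ_iff_lt_or_eq.1 hj with h | h
    · exact Or.inl ⟨_, ⟨j, h, rfl⟩, rfl⟩
    · right
      rw [Fin.ext h, X_pow_eq_monomial]
  · rintro (⟨s, ⟨j, hj, rfl⟩, rfl⟩ | rfl)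
    · exact ⟨_, ⟨j, by omega, rfl⟩, rfl⟩
    · exact ⟨_, ⟨i, by omega, rfl⟩, by rw [X_pow_eq_monomial]⟩

theorem powIdeal_reg {n : ℕ} (N : Fin n → ℕ) (i : Fin n) (p : MvPolynomial (Fin n) ℂ)
    (h : X i ^ N i * p ∈ powIdeal N i) : p ∈ powIdeal N i := by
  rw [powIdeal, mem_ideal_span_monomial_image] at h ⊢
  intro s hs
  obtain ⟨t, ⟨j, hj, rfl⟩, ht⟩ := h (Finsupp.single i (N i) + s) (by
    rw [mem_support_iff, X_pow_eq_monomial, coeff_monomial_mul, one_mul]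
    exact mem_support_iff.1 hs)
  refine ⟨_, ⟨j, hj, rfl⟩, ?_⟩
  have hne : i ≠ j := by rintro rfl; omega
  rw [Finsupp.single_le_iff] at ht ⊢
  simpa [Finsupp.single_apply, hne] using ht

theorem hc_hom_mul {n : ℕ} (p q : MvPolynomial (Fin n) ℂ) (i E : ℕ) (hp : p.IsHomogeneous i) :
    homogeneousComponent E (p * q) = if i ≤ E then p * homogeneousComponent (E - i) q else 0 := by
  letI : GradedAlgebra (homogeneousSubmodule (Fin n) ℂ) := MvPolynomial.gradedAlgebra
  have hd : ∀ (r : MvPolynomial (Fin n) ℂ) (k : ℕ),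
      (DirectSum.decompose (homogeneousSubmodule (Fin n) ℂ) r k : MvPolynomial (Fin n) ℂ) =
        homogeneousComponent k r := fun r k => decomposition.decompose'_apply r k
  have := DirectSum.coe_decompose_mul_of_left_mem (𝒜 := homogeneousSubmodule (Fin n) ℂ)
    (a := p) (b := q) (i := i) E ((mem_homogeneousSubmodule _ _).2 hp)
  rwa [hd, hd] at this

/-- The component of `q` of degree `E - d`, and zero if `E < d`. -/
noncomputable def tc {n : ℕ} (E d : ℕ) (q : MvPolynomial (Fin n) ℂ) : MvPolynomial (Fin n) ℂ :=
  if d ≤ E then homogeneousComponent (E - d) q else 0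

theorem hc_mul_top {n : ℕ} (p q : MvPolynomial (Fin n) ℂ) (E : ℕ)
    (hq : ∀ m, E < m + p.totalDegree → homogeneousComponent m q = 0) :
    homogeneousComponent E (p * q) =
      homogeneousComponent p.totalDegree p * tc E p.totalDegree q := by
  conv_lhs => rw [← sum_homogeneousComponent p]
  rw [Finset.sum_mul, map_sum, Finset.sum_range_succ, Finset.sum_eq_zero, zero_add,
    hc_hom_mul _ _ _ _ (homogeneousComponent_isHomogeneous _ _), tc, mul_ite, mul_zero]
  intro i hi
  rw [hc_hom_mul _ _ _ _ (homogeneousComponent_isHomogeneous _ _)]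
  split_ifs with h
  · rw [hq, mul_zero]
    have := Finset.mem_range.1 hi
    omega
  · rfl

theorem hc_mul_gt {n : ℕ} (p q : MvPolynomial (Fin n) ℂ) (E m : ℕ) (hm : E < m)
    (hq : ∀ m, E < m + p.totalDegree → homogeneousComponent m q = 0) :
    homogeneousComponent m (p * q) = 0 := by
  rw [hc_mul_top _ _ _ fun m' hm' => hq m' (by omega), tc]
  split_ifs with h
  · rw [hq _ (by omega), mul_zero]
  · simp

theorem graded_syzygy {n : ℕ} (d : Fin n → ℕ) (f : Fin n → MvPolynomial (Fin n) ℂ)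
    (hf : ∀ j, (f j).IsHomogeneous (d j))
    (h : ∀ w : Fin n → ℂ, (∀ j, eval w (f j) = 0) → w = 0) (E : ℕ)
    (Q : Fin n → MvPolynomial (Fin n) ℂ) (hQ : ∑ j, f j * tc E (d j) (Q j) = 0) :
    ∃ b : Fin n → Fin n → MvPolynomial (Fin n) ℂ, (∀ j k, b j k = - b k j) ∧
      (∀ j k, b j k = tc E (d j + d k) (b j k)) ∧
      ∀ j, tc E (d j) (Q j) = ∑ k, f k * b j k := by
  choose N hN using exists_pow_mem f h
  obtain ⟨b, hb, hb'⟩ := koszul_syzygy f (fun i => X i ^ N i) hN (powIdeal N)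
    (by simp [powIdeal]) (powIdeal_succ N) (powIdeal_reg N) (fun j => tc E (d j) (Q j))
    (by simpa only [mul_comm] using hQ)
  refine ⟨fun j k => tc E (d j + d k) (b j k), fun j k => ?_, fun j k => ?_, fun j => ?_⟩
  · simp only [tc]
    rw [add_comm (d j), hb j k]
    split_ifs <;> simp
  · simp only [tc]
    split_ifs
    · rw [homogeneousComponent_of_mem (homogeneousComponent_mem _ _), if_pos rfl]
    · rfl
  · have hj := hb' j
    by_cases hd : d j ≤ E
    · have h1 : tc E (d j) (Q j) = homogeneousComponent (E - d j) (tc E (d j) (Q j)) := by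
        rw [tc, if_pos hd,
          homogeneousComponent_of_mem (homogeneousComponent_mem _ _), if_pos rfl]
      rw [h1]
      rw [hj, map_sum]
      refine Finset.sum_congr rfl fun k _ => ?_
      rw [mul_comm, hc_hom_mul _ _ _ _ (hf k)]
      simp only [tc]
      by_cases hk : d k ≤ E - d j
      · rw [if_pos hk, if_pos (by omega), Nat.sub_sub]
      · rw [if_neg hk, if_neg (by omega), mul_zero]
    · rw [tc, if_neg hd, eq_comm]
      refine Finset.sum_eq_zero fun k _ => ?_
      simp only [tc]
      rw [if_neg (by omega), mul_zero]

theorem sum_antisymm_zero {n : ℕ} (F : Fin n → MvPolynomial (Fin n) ℂ)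
    (b : Fin n → Fin n → MvPolynomial (Fin n) ℂ) (hb : ∀ j k, b j k = - b k j) :
    ∑ j, F j * ∑ k, F k * b j k = 0 := by
  have h : ∑ j, F j * ∑ k, F k * b j k = - ∑ j, F j * ∑ k, F k * b j k := by
    simp only [Finset.mul_sum]
    conv_lhs => rw [Finset.sum_comm]
    rw [← Finset.sum_neg_distrib]
    refine Finset.sum_congr rfl fun j _ => ?_
    rw [← Finset.sum_neg_distrib]
    refine Finset.sum_congr rfl fun k _ => ?_
    rw [hb k j]; ring
  exact self_eq_neg.1 h

theorem descent_step {n : ℕ} (F : Fin n → MvPolynomial (Fin n) ℂ) (Φ : MvPolynomial (Fin n) ℂ)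
    (h : ∀ w : Fin n → ℂ,
      (∀ j, eval w (homogeneousComponent (F j).totalDegree (F j)) = 0) → w = 0)
    (e : ℕ) (he : Φ.totalDegree ≤ e) (Q : Fin n → MvPolynomial (Fin n) ℂ)
    (hQ : Φ = ∑ j, F j * Q j)
    (hdeg : ∀ j m, e + 1 < m + (F j).totalDegree → homogeneousComponent m (Q j) = 0) :
    ∃ Q' : Fin n → MvPolynomial (Fin n) ℂ, Φ = ∑ j, F j * Q' j ∧
      ∀ j m, e < m + (F j).totalDegree → homogeneousComponent m (Q' j) = 0 := by
  have h0 : homogeneousComponent (e + 1) Φ = 0 :=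
    homogeneousComponent_eq_zero _ _ (by omega)
  rw [hQ, map_sum, Finset.sum_congr rfl fun j _ => hc_mul_top (F j) (Q j) (e + 1) (hdeg j)] at h0
  obtain ⟨b, hb, hb1, hb2⟩ := graded_syzygy (fun j => (F j).totalDegree) _
    (fun j => homogeneousComponent_isHomogeneous _ _) h (e + 1) Q h0
  refine ⟨fun j => Q j - ∑ k, F k * b j k, ?_, fun j m hm => ?_⟩
  · simp only [mul_sub, Finset.sum_sub_distrib]
    rw [sum_antisymm_zero F b hb, sub_zero, hQ]
  · have hbz : ∀ k m', e + 1 < m' + (F k).totalDegree + (F j).totalDegree →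
        homogeneousComponent m' (b j k) = 0 := by
      intro k m' hm'
      rw [hb1 j k, tc]
      split_ifs with hle
      · rw [homogeneousComponent_of_mem (homogeneousComponent_mem _ _), if_neg (by omega)]
      · simp
    rw [map_sub, map_sum]
    have hterm : ∀ k, homogeneousComponent m (F k * b j k) =
        homogeneousComponent (F k).totalDegree (F k) * tc m (F k).totalDegree (b j k) :=
      fun k => hc_mul_top _ _ _ fun m' hm' => hbz k m' (by omega)
    simp only [hterm]
    by_cases hlt : e + 1 < m + (F j).totalDegree
    · rw [hdeg j m hlt, Finset.sum_eq_zero, sub_zero]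
      intro k _
      rw [tc]
      split_ifs with hle
      · rw [hbz k _ (by omega), mul_zero]
      · simp
    · have hm' : m = e + 1 - (F j).totalDegree := by omega
      have hh := hb2 j
      rw [tc, if_pos (by omega), ← hm'] at hh
      rw [hh, sub_eq_zero]
      refine Finset.sum_congr rfl fun k _ => ?_
      congr 1
      conv_lhs => rw [hb1 j k]
      simp only [tc]
      by_cases hk : (F k).totalDegree ≤ m
      · rw [if_pos hk, if_pos (by omega)]
        congr 2
        omega
      · rw [if_neg hk, if_neg (by omega)]

theorem max_noether (n : ℕ) (F : Fin n → MvPolynomial (Fin n) ℂ)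
    (Φ : MvPolynomial (Fin n) ℂ)
    -- every nonzero common zero of the homogenizations lies in the affine chart
    (haffine : ∀ z : Fin (n + 1) → ℂ, z ≠ 0 →
      (∀ j, eval z (homogenize n ((F j).totalDegree) (F j)) = 0) → z 0 ≠ 0)
    -- the common projective zero set is finite
    (hfinite : {z : Fin (n + 1) → ℂ |
      (∀ j, eval z (homogenize n ((F j).totalDegree) (F j)) = 0) ∧ z 0 = 1}.Finite)
    (hΦ : Φ ∈ Ideal.span (Set.range F)) :
    ∃ Q : Fin n → MvPolynomial (Fin n) ℂ,
      Φ = ∑ j, F j * Q j ∧ ∀ j, (F j * Q j).totalDegree ≤ Φ.totalDegree := by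
  have h : ∀ w : Fin n → ℂ,
      (∀ j, eval w (homogeneousComponent (F j).totalDegree (F j)) = 0) → w = 0 := by
    intro w hw
    by_contra hne
    refine haffine (Fin.cons 0 w) (fun hz => hne ?_) (fun j => ?_) (by simp)
    · ext i
      have := congrFun hz i.succ
      simpa using this
    · rw [eval_homogenize_zero, hw]
  have descent : ∀ t, (∃ Q : Fin n → MvPolynomial (Fin n) ℂ, Φ = ∑ j, F j * Q j ∧
      ∀ j m, Φ.totalDegree + t < m + (F j).totalDegree → homogeneousComponent m (Q j) = 0) →
      ∃ Q : Fin n → MvPolynomial (Fin n) ℂ, Φ = ∑ j, F j * Q j ∧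
      ∀ j m, Φ.totalDegree < m + (F j).totalDegree → homogeneousComponent m (Q j) = 0 := by
    intro t
    induction t with
    | zero => exact id
    | succ t ih =>
      rintro ⟨Q, hQ, hdeg⟩
      exact ih (descent_step F Φ h (Φ.totalDegree + t) (by omega) Q hQ hdeg)
  obtain ⟨c, hc⟩ := (Ideal.mem_span_range_iff_exists_fun).1 hΦ
  obtain ⟨Q, hQ, hdeg⟩ := descent (∑ j, ((c j).totalDegree + (F j).totalDegree))
    ⟨c, by rw [← hc]; exact Finset.sum_congr rfl fun _ _ => mul_comm _ _, fun j m hm => by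
      apply homogeneousComponent_eq_zero
      have := Finset.single_le_sum (f := fun j => (c j).totalDegree + (F j).totalDegree)
        (fun _ _ => Nat.zero_le _) (Finset.mem_univ j)
      omega⟩
  refine ⟨Q, hQ, fun j => ?_⟩
  refine Finset.sup_le ?_
  intro s hs
  by_contra hlt
  push Not at hlt
  have hz := hc_mul_gt (F j) (Q j) Φ.totalDegree s.degree
    (by simpa [Finsupp.degree_apply, Finsupp.sum] using hlt) (hdeg j)
  have := congrArg (coeff s) hz
  rw [coeff_homogeneousComponent, if_pos rfl] at this
  exact mem_support_iff.1 hs this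
end
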